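/- arXiv:0803.1536 — 2 statements merged into one kernel-verified Lean document; each statement's English description precedes it below -/
import Mathlib

section
/- Let K be a field, N > 1, m ≥ 2, and Λ_N as above. For each i set f_i = a_i ā_i + ā_i a_i ∈ Z(Λ_N). Then f_i^s = (a_i ā_i)^s + (ā_i a_i)^s in Λ_N for every 1 ≤ s ≤ N-1, and f_i^N = (a_i ā_i)^N + (ā_i a_i)^N. Consequently the centre Z(Λ_N) is generated as a K-algebra by {1} ∪ {(a_i ā_i)^N : i} ∪ {a_i ā_i + ā_i a_i : i}. -/
/-- Generators of the path algebra of the cyclic double quiver: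
trivial paths `e i`, arrows `a i : i → i+1` and `abar i : i+1 → i`. -/
inductive Gen (m : ℕ) : Type
  | e (i : ZMod m)
  | a (i : ZMod m)
  | abar (i : ZMod m)

variable (K : Type) [Field K] (m N : ℕ) [NeZero m]

/-- The trivial path `e i` in the free algebra. -/
def Efree (i : ZMod m) : FreeAlgebra K (Gen m) := FreeAlgebra.ι K (Gen.e i)
/-- The arrow `a_i : i → i+1` in the free algebra. -/
def Afree (i : ZMod m) : FreeAlgebra K (Gen m) := FreeAlgebra.ι K (Gen.a i)
/-- The arrow `ā_i : i+1 → i` in the free algebra. -/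
def ABfree (i : ZMod m) : FreeAlgebra K (Gen m) := FreeAlgebra.ι K (Gen.abar i)

/-- The defining relations of `Λ_N = KQ/I_N`: the path algebra relations for the
quiver `Q` together with the relations generating `I_N`. -/
inductive LamRel : FreeAlgebra K (Gen m) → FreeAlgebra K (Gen m) → Prop
  | idem (i : ZMod m) : LamRel (Efree K m i * Efree K m i) (Efree K m i)
  | orth (i j : ZMod m) (h : i ≠ j) : LamRel (Efree K m i * Efree K m j) 0
  | sum_e : LamRel (∑ i : ZMod m, Efree K m i) 1
  | src_a (i : ZMod m) : LamRel (Efree K m i * Afree K m i) (Afree K m i)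
  | tgt_a (i : ZMod m) : LamRel (Afree K m i * Efree K m (i + 1)) (Afree K m i)
  | src_ab (i : ZMod m) : LamRel (Efree K m (i + 1) * ABfree K m i) (ABfree K m i)
  | tgt_ab (i : ZMod m) : LamRel (ABfree K m i * Efree K m i) (ABfree K m i)
  | zero_aa (i : ZMod m) : LamRel (Afree K m i * Afree K m (i + 1)) 0
  | zero_abab (i : ZMod m) : LamRel (ABfree K m i * ABfree K m (i - 1)) 0
  | comm (i : ZMod m) :
      LamRel ((Afree K m i * ABfree K m i) ^ N) ((ABfree K m (i - 1) * Afree K m (i - 1)) ^ N)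

/-- The special biserial algebra `Λ_N = KQ/I_N`. -/
abbrev Lam : Type := RingQuot (LamRel K m N)

/-- The trivial path `e_i` in `Λ_N`. -/
def e (i : ZMod m) : Lam K m N := RingQuot.mkAlgHom K (LamRel K m N) (Efree K m i)
/-- The arrow `a_i` in `Λ_N`. -/
def a (i : ZMod m) : Lam K m N := RingQuot.mkAlgHom K (LamRel K m N) (Afree K m i)
/-- The arrow `ā_i` in `Λ_N`. -/
def ab (i : ZMod m) : Lam K m N := RingQuot.mkAlgHom K (LamRel K m N) (ABfree K m i)

/-- `f_i = a_i ā_i + ā_i a_i`. -/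
def f (i : ZMod m) : Lam K m N := a K m N i * ab K m N i + ab K m N i * a K m N i

/-!
Write `x_i = a_i ā_i` and `y_i = ā_i a_i`. Since `a a = ā ā = 0`, a path from `i` to itself is a
power of `x_i` or of `y_{i-1}`, and for a central `z` this gives
`z e_i = c_i e_i + p_i(x_i) x_i + q_i(y_{i-1}) y_{i-1}`. As `f_i` acts as `x_i` on `x_i` and as
`y_i` on `y_i`, subtracting the element `∑ q_{i+1}(f_i) f_i` leaves a central `w` with
`w e_i = c_i e_i + r_i(x_i) x_i`. Computing `w x_i = a_i w ā_i` in two ways yields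
`(c_i - c_{i+1}) x_i + r_i(x_i) x_i² = 0`. Because `x_i^N ≠ 0 = x_i^{N+1}`, all `c_i` coincide and
`r_i(x_i) x_i` is a multiple of `x_i^N`, so that `w` is a combination of `1` and the `x_i^N`.

That `x_i^N ≠ 0` is seen without a basis of `Λ_N`: letting `a_i`, `ā_i` act as the off-diagonal
matrix units, with a factor `X` for `ā_i`, represents the free algebra by `2 × 2` matrices over
`K[X]`, one for each edge, and the `X^N`-coefficient of the trace vanishes on the ideal of relations
but not on `x_i^N`.
-/

open Polynomial

section Congruence

variable {R M : Type*} [Semiring R] [AddMonoid M]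

/-- The syntactic congruence of an additive functional `ψ`: two elements are identified when `ψ`
cannot tell them apart inside any two-sided product. It is the coarsest ring congruence along
which `ψ` factors. -/
def syntacticRingCon (ψ : R →+ M) : RingCon R where
  r x y := ∀ u v, ψ (u * x * v) = ψ (u * y * v)
  iseqv :=
    { refl _ _ _ := rfl
      symm h u v := (h u v).symm
      trans h h' u v := (h u v).trans (h' u v) }
  add' h h' u v := by simp only [mul_add, add_mul, map_add, h u v, h' u v]
  mul' {x₁ y₁ x₂ y₂} h h' u v := by
    calc ψ (u * (x₁ * x₂) * v) = ψ (u * x₁ * (x₂ * v)) := by simp only [mul_assoc]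
      _ = ψ (u * y₁ * x₂ * v) := by rw [h, mul_assoc _ x₂]
      _ = ψ (u * (y₁ * y₂) * v) := by rw [h', mul_assoc u]

theorem map_eq_of_mkRingHom_eq {r : R → R → Prop} {ψ : R →+ M}
    (hψ : ∀ ⦃x y⦄, r x y → ∀ u v, ψ (u * x * v) = ψ (u * y * v)) {x y : R}
    (hxy : RingQuot.mkRingHom r x = RingQuot.mkRingHom r y) : ψ x = ψ y := by
  let c := syntacticRingCon ψ
  let π : RingQuot r →+* c.Quotient := RingQuot.lift ⟨c.mk', fun _ _ h => c.eq.2 (hψ h)⟩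
  have hπ (x : R) : π (RingQuot.mkRingHom r x) = x := RingQuot.lift_mkRingHom_apply _ _ _
  have hc : c x y := c.eq.1 (by rw [← hπ, ← hπ, hxy])
  simpa using hc 1 1

end Congruence

section Aeval

variable {k A : Type*} [CommSemiring k] [Semiring A] [Algebra k A]

theorem aeval_mul_eq_mul_aeval {x y v : A} (h : x * v = v * y) (p : k[X]) :
    aeval x p * v = v * aeval y p := by
  induction p using Polynomial.induction_on' with
  | add p q hp hq => rw [map_add, map_add, add_mul, mul_add, hp, hq]
  | monomial n c =>
    have hn : SemiconjBy v (y ^ n) (x ^ n) := SemiconjBy.pow_right h.symm n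
    rw [aeval_monomial, aeval_monomial, mul_assoc, ← hn.eq, ← mul_assoc, ← mul_assoc,
      Algebra.commutes]

theorem aeval_mul_of_mul_eq_zero {x v : A} (h : x * v = 0) (p : k[X]) :
    aeval x p * v = p.coeff 0 • v := by
  rw [aeval_mul_eq_mul_aeval (y := 0) (by rw [h, mul_zero]), ← coeff_zero_eq_aeval_zero',
    ← Algebra.commutes, Algebra.smul_def]

end Aeval

section Nilpotent

variable {k A : Type*} [Field k] [Ring A] [Algebra k A]

theorem X_pow_succ_dvd_of_aeval_eq_zero {x : A} {n : ℕ} (hx : x ^ (n + 1) = 0) (hx' : x ^ n ≠ 0)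
    {p : k[X]} (hp : aeval x p = 0) : X ^ (n + 1) ∣ p := by
  have hmin : minpoly k x ∣ X ^ (n + 1) := minpoly.dvd k x (by simpa using hx)
  obtain ⟨d, -, hassoc⟩ := (dvd_prime_pow prime_X _).1 hmin
  have hd' : n + 1 ≤ d := by
    by_contra! hlt
    have : minpoly k x ∣ X ^ n := hassoc.dvd.trans (pow_dvd_pow X (by omega))
    exact hx' (by simpa using (minpoly.dvd_iff.1 this))
  exact (pow_dvd_pow X hd').trans (hassoc.symm.dvd.trans (minpoly.dvd k x hp))

theorem eq_zero_and_exists_smul_pow {x : A} {n : ℕ} (hn : n ≠ 0) (hx : x ^ (n + 1) = 0)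
    (hx' : x ^ n ≠ 0) {d : k} {r : k[X]} (h : d • x + aeval x r * x * x = 0) :
    d = 0 ∧ ∃ t : k, aeval x r * x = t • x ^ n := by
  have hdvd : X ^ (n + 1) ∣ (C d + r * X) * X :=
    X_pow_succ_dvd_of_aeval_eq_zero hx hx' (by simpa [add_mul, Algebra.smul_def] using h)
  obtain ⟨g, hg⟩ := (mul_dvd_mul_iff_right X_ne_zero).1 (pow_succ (X : k[X]) n ▸ hdvd)
  have hd : d = 0 := by simpa [hn.symm] using congrArg (coeff · 0) hg
  refine ⟨hd, g.coeff 0, ?_⟩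
  have hxn : x * x ^ n = 0 := by rw [← pow_succ', hx]
  rw [hd, C_0, zero_add, mul_comm (X ^ n)] at hg
  simpa [aeval_mul_of_mul_eq_zero hxn] using congrArg (aeval x) hg

end Nilpotent

theorem add_pow_of_mul_eq_zero {R : Type*} [Semiring R] {x y : R} (hxy : x * y = 0)
    (hyx : y * x = 0) {s : ℕ} (hs : 1 ≤ s) : (x + y) ^ s = x ^ s + y ^ s := by
  induction s, hs using Nat.le_induction with
  | base => simp only [pow_one]
  | succ s hs ih =>
    obtain ⟨t, rfl⟩ := Nat.exists_eq_add_of_le' hs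
    have hx : x ^ (t + 1) * y = 0 := by rw [pow_succ, mul_assoc, hxy, mul_zero]
    have hy : y ^ (t + 1) * x = 0 := by rw [pow_succ, mul_assoc, hyx, mul_zero]
    rw [pow_succ, ih, add_mul, mul_add, mul_add, hx, hy, add_zero, zero_add, ← pow_succ, ← pow_succ]

theorem apply_eq_apply_zero_of_forall_add_one {n : ℕ} [NeZero n] {α : Type*} {c : ZMod n → α}
    (h : ∀ i, c i = c (i + 1)) (i : ZMod n) : c i = c 0 := by
  have hc : Function.Periodic c 1 := fun i => (h i).symm
  simpa using hc.nat_mul_eq i.val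

/-- Families of `2 × 2` matrices over `k[X]`, one for each edge `i — i + 1` of the cyclic quiver
with `n` vertices. In the block of that edge, index `0` stands for the vertex `i` and index `1` for
the vertex `i + 1`. -/
abbrev EdgeMatrix (k : Type*) [CommRing k] (n : ℕ) : Type _ :=
  ZMod n → Matrix (Fin 2) (Fin 2) k[X]

namespace EdgeMatrix

section NodalOrder

variable {k : Type*} [CommRing k] {n : ℕ}

variable (k n) in
/-- The families of matrices that are upper triangular at `X = 0` and whose diagonal entries at
`X = 0` agree at the vertex shared by consecutive edges. This subalgebra contains the matrices of
all paths, and on it the two sides of `(a ā)^N = (ā a)^N` have the same `traceCoeff`. -/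
def nodalOrder : Subalgebra k (EdgeMatrix k n) where
  carrier := {w | ∀ i, (w i 1 0).coeff 0 = 0 ∧ (w (i + 1) 0 0).coeff 0 = (w i 1 1).coeff 0}
  mul_mem' {u v} hu hv i := by simp [Matrix.mul_apply, hu i, hv i, hv (i + 1)]
  add_mem' {u v} hu hv i := by simp [hu i, hv i]
  algebraMap_mem' c i := by simp [Matrix.algebraMap_matrix_apply, Pi.algebraMap_apply]

variable (k) in
/-- The matrices of the generators. The variable `X` is put on `ā_i`, so that both `a_i ā_i` and
`ā_i a_i` act as `X` at their vertex of the edge `i`. -/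
noncomputable def ofGen : Gen n → EdgeMatrix k n
  | .e i => fun j => !![if j = i then 1 else 0, 0; 0, if j + 1 = i then 1 else 0]
  | .a i => fun j => !![0, if j = i then 1 else 0; 0, 0]
  | .abar i => fun j => !![0, 0; if j = i then X else 0, 0]

theorem ofGen_mem_nodalOrder (g : Gen n) : ofGen k g ∈ nodalOrder k n := by
  intro i
  cases g <;> simp [ofGen, apply_ite (coeff · 0)]

variable (k n) in
/-- The representation of the free algebra by families of matrices that extends `ofGen`. -/
noncomputable def ofFree : FreeAlgebra k (Gen n) →ₐ[k] EdgeMatrix k n :=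
  FreeAlgebra.lift k (ofGen k)

theorem ofFree_mem_nodalOrder (w : FreeAlgebra k (Gen n)) : ofFree k n w ∈ nodalOrder k n := by
  have hle : (ofFree k n).range ≤ nodalOrder k n := by
    rw [ofFree, ← Algebra.adjoin_range_eq_range_freeAlgebra_lift, Algebra.adjoin_le_iff]
    rintro _ ⟨g, rfl⟩
    exact ofGen_mem_nodalOrder g
  exact hle ⟨w, rfl⟩

theorem ofGen_a_mul_ofGen_abar_pow_apply {N : ℕ} (hN : N ≠ 0) (i j : ZMod n) :
    ((ofGen k (.a i) * ofGen k (.abar i)) ^ N) j = .diagonal ![if j = i then X ^ N else 0, 0] := by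
  have hone : (ofGen k (.a i) * ofGen k (.abar i)) j = .diagonal ![if j = i then X else 0, 0] := by
    simp only [Pi.mul_apply, ofGen, Matrix.diagonal_fin_two, Matrix.mul_fin_two]
    simp [← ite_and]
  rw [Pi.pow_apply, hone, Matrix.diagonal_pow]
  congr 1
  ext1 p
  fin_cases p <;> simp [hN, ite_pow]

theorem ofGen_abar_mul_ofGen_a_pow_apply {N : ℕ} (hN : N ≠ 0) (i j : ZMod n) :
    ((ofGen k (.abar i) * ofGen k (.a i)) ^ N) j = .diagonal ![0, if j = i then X ^ N else 0] := by
  have hone : (ofGen k (.abar i) * ofGen k (.a i)) j = .diagonal ![0, if j = i then X else 0] := by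
    simp only [Pi.mul_apply, ofGen, Matrix.diagonal_fin_two, Matrix.mul_fin_two]
    simp [← ite_and]
  rw [Pi.pow_apply, hone, Matrix.diagonal_pow]
  congr 1
  ext1 p
  fin_cases p <;> simp [hN, ite_pow]

end NodalOrder

section Trace

variable {k : Type*} [CommRing k] {n : ℕ} [NeZero n]

/-- The `N`-th coefficient of the total trace. On `nodalOrder` it does not distinguish the two sides
of any relation of `Λ_N`, and so it descends to a trace form on `Λ_N`. -/
noncomputable def traceCoeff (N : ℕ) : EdgeMatrix k n →ₗ[k] k :=
  ∑ i, lcoeff k N ∘ₗ Matrix.traceLinearMap (Fin 2) k k[X] ∘ₗ LinearMap.proj i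

theorem traceCoeff_apply (N : ℕ) (w : EdgeMatrix k n) :
    traceCoeff N w = ∑ i, (w i).trace.coeff N := by
  simp [traceCoeff]

theorem traceCoeff_mul_comm (N : ℕ) (u v : EdgeMatrix k n) :
    traceCoeff N (u * v) = traceCoeff N (v * u) := by
  simp only [traceCoeff_apply, Pi.mul_apply, Matrix.trace_mul_comm (u _)]

theorem traceCoeff_mul_ofGen_a_mul_ofGen_abar_pow {N : ℕ} (hN : N ≠ 0) (w : EdgeMatrix k n)
    (i : ZMod n) :
    traceCoeff N (w * (ofGen k (.a i) * ofGen k (.abar i)) ^ N) = (w i 0 0).coeff 0 := by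
  simp [traceCoeff_apply, ofGen_a_mul_ofGen_abar_pow_apply hN, Matrix.trace_fin_two,
    apply_ite (coeff · N), coeff_mul_X_pow']

theorem traceCoeff_mul_ofGen_abar_mul_ofGen_a_pow {N : ℕ} (hN : N ≠ 0) (w : EdgeMatrix k n)
    (i : ZMod n) :
    traceCoeff N (w * (ofGen k (.abar i) * ofGen k (.a i)) ^ N) = (w i 1 1).coeff 0 := by
  simp [traceCoeff_apply, ofGen_abar_mul_ofGen_a_pow_apply hN, Matrix.trace_fin_two,
    apply_ite (coeff · N), coeff_mul_X_pow']

end Trace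

section Relations

variable {K m N}

theorem traceCoeff_mul_ofFree_eq (hN : N ≠ 0) {x y : FreeAlgebra K (Gen m)} (h : LamRel K m N x y)
    {w : EdgeMatrix K m} (hw : w ∈ nodalOrder K m) :
    traceCoeff N (w * ofFree K m x) = traceCoeff N (w * ofFree K m y) := by
  cases h with
  | comm i =>
    simp only [map_pow, map_mul, Afree, ABfree, ofFree, FreeAlgebra.lift_ι_apply,
      traceCoeff_mul_ofGen_a_mul_ofGen_abar_pow hN, traceCoeff_mul_ofGen_abar_mul_ofGen_a_pow hN]
    simpa using (hw (i - 1)).2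
  | sum_e =>
    congr 2
    ext j p q : 3
    fin_cases p <;> fin_cases q <;> simp [Efree, ofFree, ofGen, Matrix.sum_apply]
  | _ =>
    congr 2
    ext1 j
    refine Matrix.ext fun p q => ?_
    simp only [Efree, Afree, ABfree, ofFree, map_mul, map_zero, FreeAlgebra.lift_ι_apply, ofGen,
      Pi.mul_apply, Pi.zero_apply, Matrix.mul_fin_two, mul_zero, zero_mul, add_zero, zero_add]
    fin_cases p <;> fin_cases q <;> dsimp <;> grind

end Relations

end EdgeMatrix

namespace Lam

variable {K m N}

local notation "𝐞" => e K m N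
local notation "𝐚" => a K m N
local notation "𝐛" => ab K m N
local notation "𝐟" => f K m N
local notation "𝐱[" i "]" => (a K m N i * ab K m N i)
local notation "𝐲[" i "]" => (ab K m N i * a K m N i)

section Relations

variable (i j : ZMod m)

theorem e_mul_e : 𝐞 i * 𝐞 j = if i = j then 𝐞 i else 0 := by
  split_ifs with h
  · subst h
    simpa only [e, map_mul] using RingQuot.mkAlgHom_rel K (LamRel.idem i)
  · simpa only [e, map_mul, map_zero] using RingQuot.mkAlgHom_rel K (LamRel.orth i j h)

theorem sum_e : ∑ i, 𝐞 i = 1 := by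
  simpa only [e, map_sum, map_one] using
    RingQuot.mkAlgHom_rel K (LamRel.sum_e (K := K) (m := m) (N := N))

theorem e_mul_a : 𝐞 i * 𝐚 j = if i = j then 𝐚 j else 0 := by
  have h : 𝐞 j * 𝐚 j = 𝐚 j := by
    simpa only [e, a, map_mul] using RingQuot.mkAlgHom_rel K (LamRel.src_a j)
  rw [← h, ← mul_assoc, e_mul_e, ite_mul, zero_mul]
  split_ifs with hij <;> simp [hij]

theorem a_mul_e : 𝐚 i * 𝐞 j = if i + 1 = j then 𝐚 i else 0 := by
  have h : 𝐚 i * 𝐞 (i + 1) = 𝐚 i := by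
    simpa only [e, a, map_mul] using RingQuot.mkAlgHom_rel K (LamRel.tgt_a i)
  rw [← h, mul_assoc, e_mul_e, mul_ite, mul_zero]

theorem e_mul_ab : 𝐞 i * 𝐛 j = if i = j + 1 then 𝐛 j else 0 := by
  have h : 𝐞 (j + 1) * 𝐛 j = 𝐛 j := by
    simpa only [e, ab, map_mul] using RingQuot.mkAlgHom_rel K (LamRel.src_ab j)
  rw [← h, ← mul_assoc, e_mul_e, ite_mul, zero_mul]
  split_ifs with hij <;> simp [hij]

theorem ab_mul_e : 𝐛 i * 𝐞 j = if i = j then 𝐛 i else 0 := by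
  have h : 𝐛 i * 𝐞 i = 𝐛 i := by
    simpa only [e, ab, map_mul] using RingQuot.mkAlgHom_rel K (LamRel.tgt_ab i)
  rw [← h, mul_assoc, e_mul_e, mul_ite, mul_zero]

theorem a_eq_a_mul_e : 𝐚 i = 𝐚 i * 𝐞 (i + 1) := by rw [a_mul_e, if_pos rfl]

theorem ab_eq_ab_mul_e : 𝐛 i = 𝐛 i * 𝐞 i := by rw [ab_mul_e, if_pos rfl]

theorem a_mul_a : 𝐚 i * 𝐚 j = 0 := by
  rw [a_eq_a_mul_e i, mul_assoc, e_mul_a, mul_ite, mul_zero]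
  split_ifs with h
  · subst h
    simpa only [a, map_mul, map_zero] using RingQuot.mkAlgHom_rel K (LamRel.zero_aa i)
  · rfl

theorem ab_mul_ab : 𝐛 i * 𝐛 j = 0 := by
  rw [ab_eq_ab_mul_e i, mul_assoc, e_mul_ab, mul_ite, mul_zero]
  split_ifs with h
  · obtain rfl := eq_sub_of_add_eq h.symm
    simpa only [ab, map_mul, map_zero] using RingQuot.mkAlgHom_rel K (LamRel.zero_abab i)
  · rfl

variable {i j} in
theorem a_mul_ab_of_ne (h : i ≠ j) : 𝐚 i * 𝐛 j = 0 := by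
  rw [a_eq_a_mul_e i, mul_assoc, e_mul_ab, if_neg (by simpa using h), mul_zero]

variable {i j} in
theorem ab_mul_a_of_ne (h : i ≠ j) : 𝐛 i * 𝐚 j = 0 := by
  rw [ab_eq_ab_mul_e i, mul_assoc, e_mul_a, if_neg h, mul_zero]

theorem a_mul_ab_pow_eq : 𝐱[i] ^ N = 𝐲[i - 1] ^ N := by
  simpa only [a, ab, map_pow, map_mul] using RingQuot.mkAlgHom_rel K (LamRel.comm i)

theorem f_pow {s : ℕ} (hs : 1 ≤ s) : 𝐟 i ^ s = 𝐱[i] ^ s + 𝐲[i] ^ s :=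
  add_pow_of_mul_eq_zero (by rw [mul_assoc, ← mul_assoc (𝐛 i), ab_mul_ab, zero_mul, mul_zero])
    (by rw [mul_assoc, ← mul_assoc (𝐚 i), a_mul_a, zero_mul, mul_zero]) hs

end Relations

open EdgeMatrix in
theorem a_mul_ab_pow_ne_zero (hN : N ≠ 0) (i : ZMod m) : 𝐱[i] ^ N ≠ 0 := by
  intro hx
  let ψ : FreeAlgebra K (Gen m) →+ K := (traceCoeff N ∘ₗ (ofFree K m).toLinearMap).toAddMonoidHom
  have hψ ⦃x y⦄ (hxy : LamRel K m N x y) (u v) : ψ (u * x * v) = ψ (u * y * v) := by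
    have hrot (x) : ψ (u * x * v) = traceCoeff N (ofFree K m (v * u) * ofFree K m x) := by
      change traceCoeff N (ofFree K m (u * x * v)) = _
      rw [map_mul, traceCoeff_mul_comm, ← map_mul, ← map_mul, mul_assoc]
    rw [hrot, hrot, traceCoeff_mul_ofFree_eq hN hxy (ofFree_mem_nodalOrder _)]
  have hzero : ψ ((Afree K m i * ABfree K m i) ^ N) = ψ 0 := by
    refine map_eq_of_mkRingHom_eq hψ ?_
    rw [← RingQuot.mkAlgHom_coe K, RingHom.coe_coe, map_zero, map_pow, map_mul]
    exact hx
  have hone : ψ ((Afree K m i * ABfree K m i) ^ N) = 1 := by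
    have := traceCoeff_mul_ofGen_a_mul_ofGen_abar_pow hN (1 : EdgeMatrix K m) i
    simpa [ψ, Afree, ABfree, ofFree] using this
  rw [hone, map_zero] at hzero
  exact one_ne_zero hzero

variable (K N) in
/-- The image in `Λ_N` of a generator of the free algebra. -/
def ofGen (g : Gen m) : Lam K m N := RingQuot.mkAlgHom K (LamRel K m N) (FreeAlgebra.ι K g)

theorem ofGen_e (i : ZMod m) : ofGen K N (.e i) = 𝐞 i := rfl

theorem ofGen_a (i : ZMod m) : ofGen K N (.a i) = 𝐚 i := rfl

theorem ofGen_abar (i : ZMod m) : ofGen K N (.abar i) = 𝐛 i := rfl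

theorem adjoin_range_ofGen : Algebra.adjoin K (Set.range (ofGen K N : Gen m → _)) = ⊤ := by
  have hrange : Set.range (ofGen K N : Gen m → _) =
      RingQuot.mkAlgHom K (LamRel K m N) '' Set.range (FreeAlgebra.ι K) := by
    rw [← Set.range_comp]; rfl
  rw [hrange, ← AlgHom.map_adjoin, FreeAlgebra.adjoin_range_ι, Algebra.map_top,
    AlgHom.range_eq_top]
  exact RingQuot.mkAlgHom_surjective K _

section Center

theorem mem_center_of_commute_ofGen {z : Lam K m N} (h : ∀ g, Commute z (ofGen K N g)) :
    z ∈ Subalgebra.center K (Lam K m N) := by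
  have hle : (⊤ : Subalgebra K (Lam K m N)) ≤ Subalgebra.centralizer K {z} := by
    rw [← adjoin_range_ofGen, Algebra.adjoin_le_iff]
    rintro _ ⟨g, rfl⟩
    exact Subalgebra.mem_centralizer_iff K |>.2 fun _ hz => hz ▸ h g
  refine Subalgebra.mem_center_iff.2 fun w => ?_
  exact ((Subalgebra.mem_centralizer_iff K).1 (hle (Algebra.mem_top (x := w))) z rfl).symm

theorem f_mem_center (i : ZMod m) : 𝐟 i ∈ Subalgebra.center K (Lam K m N) := by
  refine mem_center_of_commute_ofGen fun g => ?_
  rw [commute_iff_eq, f, add_mul, mul_add]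
  rcases g with j | j | j
  · simp only [ofGen_e, mul_assoc, a_mul_e, ab_mul_e, mul_ite, mul_zero]
    simp only [← mul_assoc, e_mul_a, e_mul_ab, ite_mul, zero_mul, eq_comm]
  · simp only [ofGen_a, mul_assoc, a_mul_a, mul_zero, add_zero]
    simp only [← mul_assoc, a_mul_a, zero_mul, zero_add]
    by_cases h : i = j
    · rw [h]
    · rw [a_mul_ab_of_ne (Ne.symm h), mul_assoc, ab_mul_a_of_ne h, mul_zero, zero_mul]
  · simp only [ofGen_abar, mul_assoc, ab_mul_ab, mul_zero, zero_add]
    simp only [← mul_assoc, ab_mul_ab, zero_mul, add_zero]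
    by_cases h : i = j
    · rw [h]
    · rw [ab_mul_a_of_ne (Ne.symm h), mul_assoc, a_mul_ab_of_ne h, mul_zero, zero_mul]

theorem a_mul_a_mul_ab_pow (hN : N ≠ 0) (i j : ZMod m) : 𝐚 j * 𝐱[i] ^ N = 0 := by
  rw [← mul_pow_sub_one hN, ← mul_assoc, ← mul_assoc, a_mul_a, zero_mul, zero_mul]

theorem ab_mul_a_mul_ab_pow (hN : N ≠ 0) (i j : ZMod m) : 𝐛 j * 𝐱[i] ^ N = 0 := by
  rw [a_mul_ab_pow_eq, ← mul_pow_sub_one hN, ← mul_assoc, ← mul_assoc, ab_mul_ab, zero_mul,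
    zero_mul]

theorem a_mul_ab_pow_mul_a (hN : N ≠ 0) (i j : ZMod m) : 𝐱[i] ^ N * 𝐚 j = 0 := by
  rw [a_mul_ab_pow_eq, ← pow_sub_one_mul hN, mul_assoc, mul_assoc, a_mul_a, mul_zero, mul_zero]

theorem a_mul_ab_pow_mul_ab (hN : N ≠ 0) (i j : ZMod m) : 𝐱[i] ^ N * 𝐛 j = 0 := by
  rw [← pow_sub_one_mul hN, mul_assoc, mul_assoc, ab_mul_ab, mul_zero, mul_zero]

theorem a_mul_ab_pow_succ (hN : N ≠ 0) (i : ZMod m) : 𝐱[i] ^ (N + 1) = 0 := by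
  rw [pow_succ', mul_assoc, ab_mul_a_mul_ab_pow hN, mul_zero]

theorem a_mul_ab_pow_mem_center (hN : N ≠ 0) (i : ZMod m) :
    𝐱[i] ^ N ∈ Subalgebra.center K (Lam K m N) := by
  refine mem_center_of_commute_ofGen fun g => ?_
  rcases g with j | j | j
  · refine Commute.pow_left ?_ N
    rw [commute_iff_eq, ofGen_e, mul_assoc, ab_mul_e, ← mul_assoc, e_mul_a, mul_ite, ite_mul,
      mul_zero, zero_mul]
    simp only [eq_comm]
  · rw [commute_iff_eq, ofGen_a, a_mul_a_mul_ab_pow hN, a_mul_ab_pow_mul_a hN]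
  · rw [commute_iff_eq, ofGen_abar, ab_mul_a_mul_ab_pow hN, a_mul_ab_pow_mul_ab hN]

end Center

section Corner

/-- The elements of `Λ_N` represented by the paths of `Q` that start at a given vertex and run back
and forth along a single edge. Their length is not bounded, so such an element may vanish. -/
inductive IsPathFrom : ZMod m → Lam K m N → Prop
  | e (i : ZMod m) : IsPathFrom i (𝐞 i)
  | a_ab (i : ZMod m) (s : ℕ) : IsPathFrom i (𝐱[i] ^ s * 𝐱[i])
  | a (i : ZMod m) (s : ℕ) : IsPathFrom i (𝐱[i] ^ s * 𝐚 i)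
  | ab_a (i : ZMod m) (s : ℕ) : IsPathFrom (i + 1) (𝐲[i] ^ s * 𝐲[i])
  | ab (i : ZMod m) (s : ℕ) : IsPathFrom (i + 1) (𝐲[i] ^ s * 𝐛 i)

namespace IsPathFrom

variable {i : ZMod m} {w : Lam K m N}

theorem mul_e (hw : IsPathFrom i w) (j : ZMod m) : w * 𝐞 j = 0 ∨ w * 𝐞 j = w := by
  cases hw <;> simp only [mul_assoc, e_mul_e, ab_mul_e, a_mul_e] <;> split_ifs <;> simp

theorem mul_a (hw : IsPathFrom i w) (j : ZMod m) : w * 𝐚 j = 0 ∨ IsPathFrom i (w * 𝐚 j) := by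
  cases hw with
  | e =>
    by_cases h : i = j
    · subst h
      exact .inr (by simpa [e_mul_a] using IsPathFrom.a (K := K) (N := N) i 0)
    · exact .inl (by rw [e_mul_a, if_neg h])
  | a_ab i s =>
    by_cases h : i = j
    · subst h
      exact .inr (pow_succ 𝐱[i] s ▸ .a i (s + 1))
    · exact .inl (by rw [mul_assoc, mul_assoc, ab_mul_a_of_ne h, mul_zero, mul_zero])
  | a i s => exact .inl (by rw [mul_assoc, a_mul_a, mul_zero])
  | ab_a i s => exact .inl (by rw [mul_assoc, mul_assoc, a_mul_a, mul_zero, mul_zero])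
  | ab i s =>
    by_cases h : i = j
    · subst h
      exact .inr (mul_assoc (𝐲[i] ^ s) _ _ ▸ .ab_a i s)
    · exact .inl (by rw [mul_assoc, ab_mul_a_of_ne h, mul_zero])

theorem mul_ab (hw : IsPathFrom i w) (j : ZMod m) : w * 𝐛 j = 0 ∨ IsPathFrom i (w * 𝐛 j) := by
  cases hw with
  | e =>
    by_cases h : i = j + 1
    · subst h
      exact .inr (by simpa [e_mul_ab] using IsPathFrom.ab (K := K) (N := N) j 0)
    · exact .inl (by rw [e_mul_ab, if_neg h])
  | a_ab i s => exact .inl (by rw [mul_assoc, mul_assoc, ab_mul_ab, mul_zero, mul_zero])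
  | a i s =>
    by_cases h : i = j
    · subst h
      exact .inr (mul_assoc (𝐱[i] ^ s) _ _ ▸ .a_ab i s)
    · exact .inl (by rw [mul_assoc, a_mul_ab_of_ne h, mul_zero])
  | ab_a i s =>
    by_cases h : i = j
    · subst h
      exact .inr (pow_succ 𝐲[i] s ▸ .ab i (s + 1))
    · exact .inl (by rw [mul_assoc, mul_assoc, a_mul_ab_of_ne h, mul_zero, mul_zero])
  | ab i s => exact .inl (by rw [mul_assoc, ab_mul_ab, mul_zero])

theorem mul_ofGen (hw : IsPathFrom i w) (g : Gen m) :
    w * ofGen K N g = 0 ∨ IsPathFrom i (w * ofGen K N g) := by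
  cases g with
  | e j => exact (hw.mul_e j).imp_right fun (h : w * 𝐞 j = w) => h.symm ▸ hw
  | a j => exact hw.mul_a j
  | abar j => exact hw.mul_ab j

theorem exists_mul_e_eq (hm : 2 ≤ m) (hw : IsPathFrom i w) :
    ∃ (c : K) (p q : K[X]), w * 𝐞 i =
      c • 𝐞 i + aeval 𝐱[i] p * 𝐱[i] + aeval 𝐲[i - 1] q * 𝐲[i - 1] := by
  have : Fact (1 < m) := ⟨hm⟩
  cases hw with
  | e => exact ⟨1, 0, 0, by simp [e_mul_e]⟩
  | a_ab i s => exact ⟨0, X ^ s, 0, by simp [mul_assoc, ab_mul_e]⟩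
  | a i s => exact ⟨0, 0, 0, by simp [mul_assoc, a_mul_e]⟩
  | ab_a i s => exact ⟨0, 0, X ^ s, by simp [mul_assoc, a_mul_e]⟩
  | ab i s => exact ⟨0, 0, 0, by simp [mul_assoc, ab_mul_e]⟩

end IsPathFrom

theorem e_mul_eq_zero_or_isPathFrom (i : ZMod m) {w : Lam K m N}
    (hw : w ∈ Submonoid.closure (Set.range (ofGen K N))) :
    𝐞 i * w = 0 ∨ IsPathFrom i (𝐞 i * w) := by
  induction hw using Submonoid.closure_induction_right with
  | one => exact .inr (by rw [mul_one]; exact .e i)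
  | mul_right w _ _ hg ih =>
    obtain ⟨g, rfl⟩ := hg
    rw [← mul_assoc]
    rcases ih with hzero | hpath
    · exact .inl (by rw [hzero, zero_mul])
    · exact hpath.mul_ofGen g

theorem exists_e_mul_mul_e_eq (hm : 2 ≤ m) (i : ZMod m) (z : Lam K m N) :
    ∃ (c : K) (p q : K[X]), 𝐞 i * z * 𝐞 i =
      c • 𝐞 i + aeval 𝐱[i] p * 𝐱[i] + aeval 𝐲[i - 1] q * 𝐲[i - 1] := by
  have hz : z ∈ Submodule.span K (Submonoid.closure (Set.range (ofGen K N (m := m))) : Set _) := by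
    rw [← Algebra.adjoin_eq_span, adjoin_range_ofGen]
    exact Submodule.mem_top
  induction hz using Submodule.span_induction with
  | mem w hw =>
    rcases e_mul_eq_zero_or_isPathFrom i hw with hzero | hpath
    · exact ⟨0, 0, 0, by simp [hzero]⟩
    · exact hpath.exists_mul_e_eq hm
  | zero => exact ⟨0, 0, 0, by simp⟩
  | add u v _ _ hu hv =>
    obtain ⟨c, p, q, hu⟩ := hu
    obtain ⟨c', p', q', hv⟩ := hv
    refine ⟨c + c', p + p', q + q', ?_⟩
    simp only [mul_add, add_mul, hu, hv, map_add, add_smul]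
    abel
  | smul d u _ hu =>
    obtain ⟨c, p, q, hu⟩ := hu
    refine ⟨d * c, d • p, d • q, ?_⟩
    simp only [mul_smul_comm, smul_mul_assoc, hu, map_smul, smul_add, mul_smul]

theorem exists_mul_e_eq_of_mem_center (hm : 2 ≤ m) {z : Lam K m N}
    (hz : z ∈ Subalgebra.center K (Lam K m N)) (i : ZMod m) :
    ∃ (c : K) (p q : K[X]), z * 𝐞 i =
      c • 𝐞 i + aeval 𝐱[i] p * 𝐱[i] + aeval 𝐲[i - 1] q * 𝐲[i - 1] := by
  have hcorner : 𝐞 i * z * 𝐞 i = z * 𝐞 i := by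
    rw [Subalgebra.mem_center_iff.1 hz, mul_assoc, e_mul_e, if_pos rfl]
  exact hcorner ▸ exists_e_mul_mul_e_eq hm i z

end Corner

section CenterGenerators

theorem f_mul_e (i j : ZMod m) :
    𝐟 j * 𝐞 i = (if j = i then 𝐱[j] else 0) + if j + 1 = i then 𝐲[j] else 0 := by
  simp only [f, add_mul, mul_assoc, ab_mul_e, a_mul_e, mul_ite, mul_zero]

theorem aeval_f_mul_a_mul_ab (i : ZMod m) (p : K[X]) :
    aeval (𝐟 i) p * 𝐱[i] = aeval 𝐱[i] p * 𝐱[i] := by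
  have h : 𝐟 i * 𝐱[i] = 𝐱[i] * 𝐱[i] := by
    rw [f, add_mul, mul_assoc (𝐛 i), ← mul_assoc (𝐚 i) (𝐚 i), a_mul_a, zero_mul, mul_zero, add_zero]
  rw [aeval_mul_eq_mul_aeval h, aeval_mul_eq_mul_aeval rfl]

theorem aeval_f_mul_ab_mul_a (i : ZMod m) (p : K[X]) :
    aeval (𝐟 i) p * 𝐲[i] = aeval 𝐲[i] p * 𝐲[i] := by
  have h : 𝐟 i * 𝐲[i] = 𝐲[i] * 𝐲[i] := by
    rw [f, add_mul, mul_assoc (𝐚 i), ← mul_assoc (𝐛 i) (𝐛 i), ab_mul_ab, zero_mul, mul_zero,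
      zero_add]
  rw [aeval_mul_eq_mul_aeval h, aeval_mul_eq_mul_aeval rfl]

theorem sum_aeval_f_mul_f_mul_e (q : ZMod m → K[X]) (i : ZMod m) :
    (∑ j, aeval (𝐟 j) (q (j + 1)) * 𝐟 j) * 𝐞 i =
      aeval 𝐱[i] (q (i + 1)) * 𝐱[i] + aeval 𝐲[i - 1] (q i) * 𝐲[i - 1] := by
  simp only [Finset.sum_mul, mul_assoc (aeval _ _) (𝐟 _), f_mul_e, mul_add, mul_ite, mul_zero,
    aeval_f_mul_a_mul_ab, aeval_f_mul_ab_mul_a, Finset.sum_add_distrib, ← eq_sub_iff_add_eq,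
    Finset.sum_ite_eq', Finset.mem_univ, if_true, sub_add_cancel]

theorem exists_mem_adjoin_range_f_sub_mul_e_eq (hm : 2 ≤ m) {z : Lam K m N}
    (hz : z ∈ Subalgebra.center K (Lam K m N)) :
    ∃ v ∈ Algebra.adjoin K (Set.range 𝐟), ∃ (c : ZMod m → K) (r : ZMod m → K[X]),
      ∀ i, (z - v) * 𝐞 i = c i • 𝐞 i + aeval 𝐱[i] (r i) * 𝐱[i] := by
  choose c p q hz using exists_mul_e_eq_of_mem_center hm hz
  refine ⟨∑ j, aeval (𝐟 j) (q (j + 1)) * 𝐟 j, ?_, c, fun i => p i - q (i + 1), fun i => ?_⟩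
  · refine sum_mem fun j _ => ?_
    have hj : Algebra.adjoin K {𝐟 j} ≤ Algebra.adjoin K (Set.range 𝐟) :=
      Algebra.adjoin_mono (Set.singleton_subset_iff.2 (Set.mem_range_self j))
    exact hj (mul_mem (aeval_mem_adjoin_singleton K _) (Algebra.self_mem_adjoin_singleton K _))
  · rw [sub_mul, hz, sum_aeval_f_mul_f_mul_e, map_sub, sub_mul]
    abel

theorem smul_add_aeval_mul_eq_zero_of_mem_center {w : Lam K m N}
    (hw : w ∈ Subalgebra.center K (Lam K m N)) {c : ZMod m → K} {r : ZMod m → K[X]}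
    (hwe : ∀ i, w * 𝐞 i = c i • 𝐞 i + aeval 𝐱[i] (r i) * 𝐱[i]) (i : ZMod m) :
    (c i - c (i + 1)) • 𝐱[i] + aeval 𝐱[i] (r i) * 𝐱[i] * 𝐱[i] = 0 := by
  have hleft : w * 𝐱[i] = c i • 𝐱[i] + aeval 𝐱[i] (r i) * 𝐱[i] * 𝐱[i] := by
    have hx : 𝐞 i * 𝐱[i] = 𝐱[i] := by rw [← mul_assoc, e_mul_a, if_pos rfl]
    rw [← hx, ← mul_assoc, hwe, add_mul, smul_mul_assoc, hx]
  have hright : w * 𝐱[i] = c (i + 1) • 𝐱[i] := by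
    have hb : 𝐞 (i + 1) * 𝐛 i = 𝐛 i := by rw [e_mul_ab, if_pos rfl]
    have hxb : 𝐱[i + 1] * 𝐛 i = 0 := by rw [mul_assoc, ab_mul_ab, mul_zero]
    calc w * 𝐱[i] = 𝐚 i * (w * 𝐞 (i + 1) * 𝐛 i) := by
          rw [mul_assoc w, hb, ← mul_assoc, ← mul_assoc, Subalgebra.mem_center_iff.1 hw]
      _ = c (i + 1) • 𝐱[i] := by
          rw [hwe, add_mul, smul_mul_assoc, hb, mul_assoc, hxb, mul_zero, add_zero, mul_smul_comm]
  rw [sub_smul (c i) (c (i + 1)) 𝐱[i], sub_add_eq_add_sub, ← hleft, hright, sub_self]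

theorem exists_eq_smul_one_add_sum_of_mem_center (hN : N ≠ 0) {w : Lam K m N}
    (hw : w ∈ Subalgebra.center K (Lam K m N)) {c : ZMod m → K} {r : ZMod m → K[X]}
    (hwe : ∀ i, w * 𝐞 i = c i • 𝐞 i + aeval 𝐱[i] (r i) * 𝐱[i]) :
    ∃ (d : K) (t : ZMod m → K), w = d • 1 + ∑ i, t i • 𝐱[i] ^ N := by
  have hcr (i : ZMod m) := eq_zero_and_exists_smul_pow hN (a_mul_ab_pow_succ hN i)
    (a_mul_ab_pow_ne_zero hN i) (smul_add_aeval_mul_eq_zero_of_mem_center hw hwe i)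
  have hc : ∀ i, c i = c 0 := apply_eq_apply_zero_of_forall_add_one fun i => sub_eq_zero.1 (hcr i).1
  choose t ht using fun i => (hcr i).2
  refine ⟨c 0, t, ?_⟩
  calc w = ∑ i, w * 𝐞 i := by rw [← Finset.mul_sum, sum_e, mul_one]
    _ = ∑ i, (c 0 • 𝐞 i + t i • 𝐱[i] ^ N) := by simp only [hwe, hc, ht]
    _ = c 0 • 1 + ∑ i, t i • 𝐱[i] ^ N := by
        rw [Finset.sum_add_distrib, ← Finset.smul_sum, sum_e]

theorem adjoin_eq_center (hm : 2 ≤ m) (hN : N ≠ 0) :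
    Algebra.adjoin K ((Set.range fun i => 𝐱[i] ^ N) ∪ Set.range 𝐟) =
      Subalgebra.center K (Lam K m N) := by
  have hf : Algebra.adjoin K (Set.range 𝐟) ≤ Subalgebra.center K (Lam K m N) :=
    Algebra.adjoin_le (Set.range_subset_iff.2 f_mem_center)
  have hx : Algebra.adjoin K (Set.range fun i => 𝐱[i] ^ N) ≤ Subalgebra.center K (Lam K m N) :=
    Algebra.adjoin_le (Set.range_subset_iff.2 (a_mul_ab_pow_mem_center hN))
  rw [Algebra.adjoin_union]
  refine le_antisymm (sup_le hx hf) fun z hz => ?_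
  obtain ⟨v, hv, c, r, hcr⟩ := exists_mem_adjoin_range_f_sub_mul_e_eq hm hz
  obtain ⟨d, t, hd⟩ := exists_eq_smul_one_add_sum_of_mem_center hN (sub_mem hz (hf hv)) hcr
  rw [← sub_add_cancel z v, hd]
  refine add_mem (SetLike.le_def.1 le_sup_left ?_) (SetLike.le_def.1 le_sup_right hv)
  exact add_mem (Subalgebra.smul_mem _ (one_mem _) d) (sum_mem fun i _ =>
    Subalgebra.smul_mem _ (Algebra.subset_adjoin (Set.mem_range_self i)) (t i))

end CenterGenerators

end Lam

theorem stmt4_general (hm : 2 ≤ m) (hN : N ≠ 0) :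
    (∀ i : ZMod m, ∀ s : ℕ, 1 ≤ s →
      f K m N i ^ s = (a K m N i * ab K m N i) ^ s + (ab K m N i * a K m N i) ^ s) ∧
    Algebra.adjoin K
        ({1} ∪ (Set.range fun i : ZMod m => (a K m N i * ab K m N i) ^ N) ∪
          Set.range (f K m N)) =
      Subalgebra.center K (Lam K m N) := by
  rw [Set.union_assoc, Set.singleton_union, Algebra.adjoin_insert_one]
  exact ⟨fun i _ hs => Lam.f_pow i hs, Lam.adjoin_eq_center hm hN⟩

theorem stmt4 (hm : 2 ≤ m) (hN : 1 < N) :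
    (∀ i : ZMod m, ∀ s : ℕ, 1 ≤ s → s ≤ N - 1 →
      f K m N i ^ s = (a K m N i * ab K m N i) ^ s + (ab K m N i * a K m N i) ^ s) ∧
    (∀ i : ZMod m,
      f K m N i ^ N = (a K m N i * ab K m N i) ^ N + (ab K m N i * a K m N i) ^ N) ∧
    Algebra.adjoin K
        ({1} ∪ (Set.range fun i : ZMod m => (a K m N i * ab K m N i) ^ N) ∪
          Set.range (f K m N)) =
      Subalgebra.center K (Lam K m N) := by
  obtain ⟨hpow, hcenter⟩ := stmt4_general K m N hm hN.ne_bot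
  exact ⟨fun i s hs _ => hpow i s hs, fun i => hpow i N hN.le, hcenter⟩
end

section
/- Let K be a field, m ≥ 3, N ≥ 1, Λ_N as above, and P^n = ⊕_{i=0}^{m-1} ⊕_{r=0}^{n} Λ_N e_i ⊗ e_{i+n-2r} Λ_N. Write n = pm + t with 0 ≤ t ≤ m-1. Then dim_K Hom_{Λ_N^e}(P^n, Λ_N) = (4p+2)mN if t ≠ m-1, and (4p+4)mN if t = m-1. -/
variable (K : Type) [Field K] (m N : ℕ) [NeZero m]

open scoped TensorProduct

/-- `Λ_N e_i`, the left-multiple space, i.e. the range of right multiplication by `e_i`. -/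
def Lsub (i : ZMod m) : Submodule K (Lam K m N) :=
  LinearMap.range (LinearMap.mulRight K (e K m N i))

/-- `e_j Λ_N`, the range of left multiplication by `e_j`. -/
def Rsub (j : ZMod m) : Submodule K (Lam K m N) :=
  LinearMap.range (LinearMap.mulLeft K (e K m N j))

/-- The projective bimodule
`P^n = ⊕_{i=0}^{m-1} ⊕_{r=0}^{n} Λ_N e_i ⊗_K e_{i+n-2r} Λ_N`. -/
abbrev Pmod (n : ℕ) : Type :=
  ∀ σ : ZMod m × Fin (n + 1),
    (Lsub K m N σ.1) ⊗[K] (Rsub K m N (σ.1 + (n : ZMod m) - 2 * ((σ.2 : ℕ) : ZMod m)))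

/-- Left multiplication by `c` on `Λ_N e_i`. -/
def lact (i : ZMod m) (c : Lam K m N) : (Lsub K m N i) →ₗ[K] (Lsub K m N i) :=
  (LinearMap.mulLeft K c).restrict (p := Lsub K m N i) (q := Lsub K m N i) (by
    rintro x ⟨y, rfl⟩
    exact ⟨c * y, by simp [LinearMap.mulRight_apply, LinearMap.mulLeft_apply, mul_assoc]⟩)

/-- Right multiplication by `c` on `e_j Λ_N`. -/
def ract (j : ZMod m) (c : Lam K m N) : (Rsub K m N j) →ₗ[K] (Rsub K m N j) :=
  (LinearMap.mulRight K c).restrict (p := Rsub K m N j) (q := Rsub K m N j) (by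
    rintro x ⟨y, rfl⟩
    exact ⟨y * c, by simp [LinearMap.mulRight_apply, LinearMap.mulLeft_apply, mul_assoc]⟩)

/-- The bimodule action of `(cl, cr)` on `P^n`: `x ↦ cl • x • cr`. -/
noncomputable def actP (n : ℕ) (cl cr : Lam K m N) : Pmod K m N n →ₗ[K] Pmod K m N n :=
  LinearMap.pi fun σ =>
    (TensorProduct.map (lact K m N σ.1 cl) (ract K m N _ cr)).comp (LinearMap.proj σ)

/-- The space `Hom_{Λ_N^e}(P^n, Λ_N)` of bimodule homomorphisms, realised as the
`K`-linear maps `P^n → Λ_N` commuting with the bimodule actions. -/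
noncomputable def HomSpace (n : ℕ) : Submodule K ((Pmod K m N n) →ₗ[K] Lam K m N) where
  carrier := {f | ∀ (cl cr : Lam K m N) (x : Pmod K m N n),
    f (actP K m N n cl cr x) = cl * f x * cr}
  add_mem' := by
    intro f g hf hg cl cr x
    simp only [LinearMap.add_apply, hf cl cr x, hg cl cr x, mul_add, add_mul]
  zero_mem' := by
    intro cl cr x
    simp
  smul_mem' := by
    intro c f hf cl cr x
    simp only [LinearMap.smul_apply, hf cl cr x, Algebra.mul_smul_comm, Algebra.smul_mul_assoc]

/-!
A bimodule homomorphism on `Λ_N e_i ⊗ e_j Λ_N` is determined by the image of `e_i ⊗ e_j`, an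
arbitrary element of `e_i Λ_N e_j`, so the dimension is a sum of dimensions of such corners.

A path in the double quiver is nonzero in `Λ_N` only if it alternates between the two directions
and has length at most `2 * N`, and the two alternating paths of length `2 * N` leaving a vertex
agree. The remaining paths are linearly independent because `Λ_N` acts on functions on the set of
alternating walks leaving a vertex. In each direction such walks end `N` times at `i` and `N` times
at the neighbour of `i`.

Summing over `r`, the conditions `n - 2r = 0` and `n - 2r = 1` in `ZMod m` together ask for the
multiples of `m` among the `2n + 2` consecutive integers `-n - 1, …, n`: there are
`n / m + (n + 1) / m + 1` of them. By the symmetry `r ↦ n - r` the other direction gives the same.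
-/

section Counting

open Finset

theorem sum_range_two_mul {M : Type*} [AddCommMonoid M] (f : ℕ → M) (n : ℕ) :
    ∑ s ∈ range (2 * n), f s = ∑ r ∈ range n, (f (2 * r) + f (2 * r + 1)) := by
  induction n with
  | zero => simp
  | succ n ih =>
    rw [mul_add, mul_one, sum_range_succ, sum_range_succ, ih, sum_range_succ, add_assoc]

theorem card_filter_natCast_eq (q n : ℕ) :
    #{s ∈ range (2 * (n + 1)) | (n : ZMod q) = (s : ℕ)} = n / q + (n + 1) / q + 1 := by
  have card_le : ∑ s ∈ range (n + 1), (if (n : ZMod q) = (s : ℕ) then 1 else 0) = n / q + 1 := by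
    rw [← sum_range_reflect, sum_range_succ', ← Nat.card_multiples n q, card_filter]
    congr 1
    · refine sum_congr rfl fun s hs => if_congr ?_ rfl rfl
      have hsn : s + 1 ≤ n := mem_range.mp hs
      rw [show n + 1 - 1 - (s + 1) = n - (s + 1) by omega, Nat.cast_sub hsn, eq_comm,
        sub_eq_self, ZMod.natCast_eq_zero_iff]
    · simp
  have card_gt : ∑ s ∈ range (n + 1), (if (n : ZMod q) = (n + 1 + s : ℕ) then 1 else 0) =
      (n + 1) / q := by
    rw [← Nat.card_multiples (n + 1) q, card_filter]
    refine sum_congr rfl fun s _ => if_congr ?_ rfl rfl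
    rw [add_assoc, add_comm 1 s, Nat.cast_add n (s + 1), left_eq_add, ZMod.natCast_eq_zero_iff]
  rw [card_filter, two_mul, sum_range_add, card_le, card_gt]
  omega

end Counting

namespace Zigzag

variable {V : Type*} [AddGroupWithOne V]

/-- The displacement of an arrow of the cyclic double quiver: `true` stands for the direction
of the arrows `a`, `false` for that of the arrows `ā`. -/
def step : Bool → V
  | true => 1
  | false => -1

/-- The direction of the `n`-th arrow (counting from `0`) of a walk that alternates between the
two directions and starts in direction `d`. -/
def turn (d : Bool) (n : ℕ) : Bool := d ^^ n.bodd

/-- The vertex reached after `n` arrows of an alternating walk that leaves `v` in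
direction `d`. -/
def endpoint (d : Bool) (v : V) (n : ℕ) : V := if n.bodd then v + step d else v

theorem add_step_add_step_not (d : Bool) (v : V) : v + step d + step (!d) = v := by
  cases d <;> simp [step]

@[simp]
theorem turn_zero (d : Bool) : turn d 0 = d := by
  simp [turn]

theorem turn_succ (d : Bool) (n : ℕ) : turn d (n + 1) = !turn d n := by
  simp [turn]

theorem turn_not (d : Bool) (n : ℕ) : turn (!d) n = !turn d n := by
  simp [turn]

@[simp]
theorem endpoint_zero (d : Bool) (v : V) : endpoint d v 0 = v := by
  simp [endpoint]

theorem endpoint_succ (d : Bool) (v : V) (n : ℕ) :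
    endpoint d v (n + 1) = endpoint d v n + step (turn d n) := by
  cases h : n.bodd <;> simp [endpoint, turn, h, add_step_add_step_not]

theorem endpoint_not_add_step (d : Bool) (v : V) (n : ℕ) :
    endpoint (!d) (v + step d) n = endpoint d v (n + 1) := by
  cases h : n.bodd <;> simp [endpoint, h, add_step_add_step_not]

theorem endpoint_two_mul (d : Bool) (v : V) (n : ℕ) : endpoint d v (2 * n) = v := by
  simp [endpoint]

theorem endpoint_two_mul_add_one (d : Bool) (v : V) (n : ℕ) :
    endpoint d v (2 * n + 1) = v + step d := by
  simp [endpoint]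

/-- The product along the alternating walk of length `n` that leaves `v` in direction `d`, where
`E v` is the factor of the trivial walk at `v` and `X d v` that of the arrow leaving `v` in
direction `d`. -/
def walk {A : Type*} [Mul A] (E : V → A) (X : Bool → V → A) : Bool → V → ℕ → A
  | _, v, 0 => E v
  | d, v, n + 1 => X d v * walk E X (!d) (v + step d) n

theorem map_walk {A B F : Type*} [Mul A] [Mul B] [FunLike F A B] [MulHomClass F A B] (f : F)
    (E : V → A) (X : Bool → V → A) (d : Bool) (v : V) (n : ℕ) :
    f (walk E X d v n) = walk (fun v => f (E v)) (fun d v => f (X d v)) d v n := by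
  induction n generalizing d v with
  | zero => rfl
  | succ n ih => rw [walk, map_mul, ih, walk]

theorem walk_two_mul {A : Type*} [Monoid A] (E : V → A) (X : Bool → V → A) (d : Bool) (v : V)
    (n : ℕ) :
    walk E X d v (2 * n) = (X d v * X (!d) (v + step d)) ^ n * E v := by
  induction n with
  | zero => simp [walk]
  | succ n ih =>
    rw [mul_add, mul_one, walk, walk, Bool.not_not, add_step_add_step_not, ih, pow_succ']
    simp only [mul_assoc]

theorem walk_two_mul_of_ne_zero {A : Type*} [Monoid A] {E : V → A} {X : Bool → V → A}
    (hXE : ∀ d v, X d v * E (v + step d) = X d v) (d : Bool) (v : V) {n : ℕ} (hn : n ≠ 0) :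
    walk E X d v (2 * n) = (X d v * X (!d) (v + step d)) ^ n := by
  obtain ⟨k, rfl⟩ := Nat.exists_eq_succ_of_ne_zero hn
  have hE : X (!d) (v + step d) * E v = X (!d) (v + step d) := by
    simpa only [add_step_add_step_not] using hXE (!d) (v + step d)
  rw [walk_two_mul, pow_succ, mul_assoc, mul_assoc, hE]

theorem sum_fin_endpoint_eq [DecidableEq V] (d : Bool) (v w : V) (N : ℕ) :
    ∑ n : Fin (2 * N), (if endpoint d v n = w then 1 else 0) =
      N * ((if v = w then 1 else 0) + if v + step d = w then 1 else 0) := by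
  rw [Fin.sum_univ_eq_sum_range (fun n => if endpoint d v n = w then 1 else 0),
    sum_range_two_mul]
  simp only [endpoint_two_mul, endpoint_two_mul_add_one, Finset.sum_const, Finset.card_range,
    smul_eq_mul]

theorem sum_fin_endpoint_succ_eq [DecidableEq V] (d : Bool) (v w : V) (N : ℕ) :
    ∑ n : Fin (2 * N), (if endpoint d v (n + 1) = w then 1 else 0) =
      N * ((if v = w then 1 else 0) + if v + step d = w then 1 else 0) := by
  simp only [← endpoint_not_add_step]
  rw [sum_fin_endpoint_eq, add_step_add_step_not, add_comm]

theorem sum_range_sub_two_mul_eq_step (q n : ℕ) (d : Bool) :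
    ∑ r ∈ Finset.range (n + 1), ((if (n : ZMod q) - 2 * r = 0 then 1 else 0) +
      if (n : ZMod q) - 2 * r = step d then 1 else 0) = n / q + (n + 1) / q + 1 := by
  have count : ∑ r ∈ Finset.range (n + 1), ((if (n : ZMod q) - 2 * r = 0 then 1 else 0) +
      if (n : ZMod q) - 2 * r = 1 then 1 else 0) = n / q + (n + 1) / q + 1 := by
    rw [← card_filter_natCast_eq, Finset.card_filter, sum_range_two_mul]
    refine Finset.sum_congr rfl fun r _ => ?_
    simp only [sub_eq_iff_eq_add', add_zero, Nat.cast_add, Nat.cast_mul, Nat.cast_ofNat,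
      Nat.cast_one]
  cases d with
  | true => exact count
  | false =>
    rw [← count, ← Finset.sum_range_reflect]
    refine Finset.sum_congr rfl fun r hr => ?_
    have reflect : (n : ZMod q) - 2 * (n + 1 - 1 - r : ℕ) = -(n - 2 * r) := by
      rw [Nat.add_sub_cancel, Nat.cast_sub (Finset.mem_range_succ_iff.mp hr)]
      ring
    simp only [reflect, step, neg_eq_zero, neg_inj]

/-- The first direction of a walk `x` once it is extended by an arrow in direction `d`; only the
trivial walk has none of its own. A walk is encoded as `(first direction, length)`. -/
def firstDir (d : Bool) (x : Bool × ℕ) : Bool := if x.2 = 0 then d else x.1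

/-- The walk `x` extended by `k` alternating arrows, the first of which has direction `d`. The two
walks of length `2 * N` are identified, with `(false, 2 * N)` as representative. -/
def extend (N : ℕ) (d : Bool) (k : ℕ) (x : Bool × ℕ) : Bool × ℕ :=
  if x.2 + k = 2 * N then (false, 2 * N) else (firstDir d x, x.2 + k)

/-- The walk `x` leaving `o` can be continued by `k` alternating arrows, the first of which leaves
`v` in direction `d`, without exceeding length `2 * N`. -/
def Extends (N : ℕ) (o : V) (d : Bool) (v : V) (k : ℕ) (x : Bool × ℕ) : Prop :=
  endpoint x.1 o x.2 = v ∧ turn (firstDir d x) x.2 = d ∧ x.2 + k ≤ 2 * N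

instance [DecidableEq V] (N : ℕ) (o : V) (d : Bool) (v : V) (k : ℕ) (x : Bool × ℕ) :
    Decidable (Extends N o d v k x) :=
  inferInstanceAs (Decidable (_ ∧ _ ∧ _))

section Extension

variable {N k l : ℕ} {o v w : V} {d d' : Bool} {x : Bool × ℕ}

theorem Extends.mono (h : Extends N o d v l x) (hkl : k ≤ l) : Extends N o d v k x :=
  ⟨h.1, h.2.1, by have := h.2.2; omega⟩

theorem Extends.endpoint_extend (h : Extends N o d v k x) :
    endpoint (extend N d 1 x).1 o (extend N d 1 x).2 = v + step d := by
  have endpoint_firstDir : endpoint (firstDir d x) o x.2 = endpoint x.1 o x.2 := by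
    unfold firstDir
    split_ifs with hx <;> simp [hx]
  have endpoint_succ_eq : endpoint (firstDir d x) o (x.2 + 1) = v + step d := by
    rw [endpoint_succ, endpoint_firstDir, h.1, h.2.1]
  unfold extend
  split_ifs with hx
  · rw [← endpoint_succ_eq, hx, endpoint_two_mul, endpoint_two_mul]
  · exact endpoint_succ_eq

theorem Extends.extends_extend_iff (h : Extends N o d v 1 x) :
    Extends N o d' w (l + 1) (extend N d 1 x) ↔
      w = v + step d ∧ d' = !d ∧ x.2 + (l + 2) ≤ 2 * N := by
  have turn_succ_eq : turn (firstDir d x) (x.2 + 1) = !d := by rw [turn_succ, h.2.1]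
  rw [Extends, h.endpoint_extend, eq_comm]
  by_cases hx : x.2 + 1 = 2 * N
  · simp only [extend, hx, if_true]
    omega
  · simp only [extend, hx, if_false]
    rw [firstDir, if_neg (Nat.succ_ne_zero _), turn_succ_eq, eq_comm (a := !d),
      add_assoc, add_comm 1 (l + 1)]

theorem extend_extend (hx : x.2 + 1 ≠ 2 * N) :
    extend N d' l (extend N d 1 x) = extend N d (l + 1) x := by
  simp only [extend, hx, if_false, firstDir, Nat.succ_ne_zero, add_assoc, add_comm l 1]

end Extension

section Representation

variable (R : Type*) [Semiring R] [DecidableEq V] (N : ℕ) (o : V)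

/-- The operator of the trivial path at `v` on functions of the alternating walks leaving `o`. -/
def vertexOp (v : V) : Module.End R (Bool × ℕ → R) :=
  LinearMap.pi fun x => if endpoint x.1 o x.2 = v then LinearMap.proj x else 0

/-- The operator of the arrow leaving `v` in direction `d`: it sends `F` to the function
`x ↦ F (x extended by the arrow)`, with value `0` where there is no extension. Precomposition turns
the right action on walks into a covariant representation. -/
def arrowOp (d : Bool) (v : V) : Module.End R (Bool × ℕ → R) :=
  LinearMap.pi fun x => if Extends N o d v 1 x then LinearMap.proj (extend N d 1 x) else 0

variable {R N o}

theorem vertexOp_apply (v : V) (F : Bool × ℕ → R) (x : Bool × ℕ) :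
    vertexOp R o v F x = if endpoint x.1 o x.2 = v then F x else 0 := by
  simp only [vertexOp, LinearMap.pi_apply]
  split_ifs <;> rfl

theorem arrowOp_apply (d : Bool) (v : V) (F : Bool × ℕ → R) (x : Bool × ℕ) :
    arrowOp R N o d v F x = if Extends N o d v 1 x then F (extend N d 1 x) else 0 := by
  simp only [arrowOp, LinearMap.pi_apply]
  split_ifs <;> rfl

theorem vertexOp_mul_self (v : V) : vertexOp R o v * vertexOp R o v = vertexOp R o v := by
  refine LinearMap.ext fun F => funext fun x => ?_
  simp only [Module.End.mul_apply, vertexOp_apply]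
  split_ifs <;> rfl

theorem vertexOp_mul_vertexOp_of_ne {v w : V} (h : v ≠ w) :
    vertexOp R o v * vertexOp R o w = 0 := by
  refine LinearMap.ext fun F => funext fun x => ?_
  simp only [Module.End.mul_apply, vertexOp_apply]
  split_ifs with hv hw
  · exact absurd (hv.symm.trans hw) h
  all_goals rfl

theorem sum_vertexOp [Fintype V] : ∑ v, vertexOp R o v = 1 := by
  refine LinearMap.ext fun F => funext fun x => ?_
  simp [LinearMap.sum_apply, Finset.sum_apply, vertexOp_apply]

theorem vertexOp_mul_arrowOp (d : Bool) (v : V) :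
    vertexOp R o v * arrowOp R N o d v = arrowOp R N o d v := by
  refine LinearMap.ext fun F => funext fun x => ?_
  simp only [Module.End.mul_apply, vertexOp_apply, arrowOp_apply, ← ite_and]
  exact if_congr (and_iff_right_of_imp And.left) rfl rfl

theorem arrowOp_mul_vertexOp (d : Bool) (v : V) :
    arrowOp R N o d v * vertexOp R o (v + step d) = arrowOp R N o d v := by
  refine LinearMap.ext fun F => funext fun x => ?_
  simp only [Module.End.mul_apply, arrowOp_apply, vertexOp_apply]
  split_ifs with hx hend
  · rfl
  · exact absurd hx.endpoint_extend hend
  · rfl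

theorem arrowOp_mul_arrowOp_same (d : Bool) (v w : V) :
    arrowOp R N o d v * arrowOp R N o d w = 0 := by
  refine LinearMap.ext fun F => funext fun x => ?_
  simp only [Module.End.mul_apply, arrowOp_apply]
  split_ifs with hx hxx
  · exact absurd (hx.extends_extend_iff.mp hxx).2.1 (by simp)
  all_goals rfl

theorem walk_op_succ_apply (d : Bool) (v : V) (k : ℕ) (F : Bool × ℕ → R) (x : Bool × ℕ) :
    walk (vertexOp R o) (arrowOp R N o) d v (k + 1) F x =
      if Extends N o d v (k + 1) x then F (extend N d (k + 1) x) else 0 := by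
  induction k generalizing d v x with
  | zero => rw [walk, walk, arrowOp_mul_vertexOp, arrowOp_apply]
  | succ k ih =>
    rw [walk, Module.End.mul_apply, arrowOp_apply]
    by_cases hx : Extends N o d v 1 x
    · have extends_iff : Extends N o (!d) (v + step d) (k + 1) (extend N d 1 x) ↔
          Extends N o d v (k + 1 + 1) x := by
        rw [hx.extends_extend_iff]
        exact ⟨fun h => ⟨hx.1, hx.2.1, h.2.2⟩, fun h => ⟨rfl, rfl, h.2.2⟩⟩
      rw [if_pos hx, ih]
      by_cases hlong : Extends N o d v (k + 1 + 1) x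
      · rw [if_pos (extends_iff.mpr hlong), if_pos hlong,
          extend_extend (by have := hlong.2.2; omega)]
      · rw [if_neg (mt extends_iff.mp hlong), if_neg hlong]
    · rw [if_neg hx, if_neg fun hlong => hx (hlong.mono (by omega))]

-- An extension of length `2 * N` exists for the trivial walk only.
theorem walk_op_two_mul_not (hN : N ≠ 0) (d : Bool) (v : V) :
    walk (vertexOp R o) (arrowOp R N o) d v (2 * N) =
      walk (vertexOp R o) (arrowOp R N o) (!d) v (2 * N) := by
  refine LinearMap.ext fun F => funext fun x => ?_
  rw [show 2 * N = 2 * N - 1 + 1 by omega, walk_op_succ_apply, walk_op_succ_apply,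
    show 2 * N - 1 + 1 = 2 * N by omega]
  by_cases hx : x.2 = 0
  · simp [Extends, extend, firstDir, hx]
  · rw [if_neg fun h => hx (by have := h.2.2; omega), if_neg fun h => hx (by have := h.2.2; omega)]

theorem loop_op_pow_not (hN : N ≠ 0) (d : Bool) (v : V) :
    (arrowOp R N o d v * arrowOp R N o (!d) (v + step d)) ^ N =
      (arrowOp R N o (!d) v * arrowOp R N o d (v + step (!d))) ^ N := by
  have h := walk_op_two_mul_not (R := R) (o := o) hN d v
  rwa [walk_two_mul_of_ne_zero arrowOp_mul_vertexOp d v hN,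
    walk_two_mul_of_ne_zero arrowOp_mul_vertexOp (!d) v hN, Bool.not_not] at h

end Representation

/-- The walks, in the encoding `(first direction, length)`, that index a basis of the paths leaving
a vertex: the trivial walk is listed with first direction `true`, the identified walks of length
`2 * N` with first direction `false`. -/
def basisWalk {N : ℕ} (x : Bool × Fin (2 * N)) : Bool × ℕ := (x.1, if x.1 then x.2 else x.2 + 1)

theorem basisWalk_injective {N : ℕ} : Function.Injective (basisWalk (N := N)) := by
  rintro ⟨d, n⟩ ⟨d', n'⟩ h
  obtain ⟨rfl, hn⟩ := Prod.ext_iff.mp h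
  cases d <;> simp_all [basisWalk, Fin.ext_iff]

/-- The indices of the basis walks from `v` to `w`. -/
abbrev CornerIndex (N : ℕ) (v w : V) : Type :=
  {x : Bool × Fin (2 * N) // endpoint (basisWalk x).1 v (basisWalk x).2 = w}

theorem card_cornerIndex [DecidableEq V] (N : ℕ) (v w : V) :
    Fintype.card (CornerIndex N v w) =
      N * ∑ d : Bool, ((if v = w then 1 else 0) + if v + step d = w then 1 else 0) := by
  rw [Fintype.card_subtype, Finset.card_filter, Fintype.sum_prod_type, Finset.mul_sum]
  refine Finset.sum_congr rfl fun d _ => ?_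
  cases d
  · exact sum_fin_endpoint_succ_eq false v w N
  · exact sum_fin_endpoint_eq true v w N

theorem walk_op_basisWalk_apply {R : Type*} [Semiring R] [DecidableEq V] {N : ℕ} (o : V)
    (x : Bool × Fin (2 * N)) (F : Bool × ℕ → R) :
    walk (vertexOp R o) (arrowOp R N o) (basisWalk x).1 o (basisWalk x).2 F (true, 0) =
      F (basisWalk x) := by
  obtain ⟨d, n, hn⟩ := x
  match d, n with
  | true, 0 => simp [basisWalk, walk, vertexOp_apply]
  | true, n + 1 =>
    have hext : Extends N o true o (n + 1) (true, 0) :=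
      ⟨endpoint_zero true o, turn_zero true, (Nat.zero_add _).trans_le hn.le⟩
    rw [basisWalk, if_pos rfl, walk_op_succ_apply, if_pos hext]
    simp [extend, firstDir, hn.ne]
  | false, n =>
    have hext : Extends N o false o (n + 1) (true, 0) :=
      ⟨endpoint_zero true o, turn_zero false, (Nat.zero_add _).trans_le hn⟩
    rw [basisWalk, if_neg Bool.false_ne_true, walk_op_succ_apply, if_pos hext]
    simp only [extend, firstDir, zero_add]
    split_ifs with hlast <;> simp [hlast]

end Zigzag

namespace Lam

open Zigzag

section Paths

variable {K m N}

theorem isIdempotentElem_e (v : ZMod m) : IsIdempotentElem (e K m N v) := by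
  simpa only [IsIdempotentElem, e, map_mul] using RingQuot.mkAlgHom_rel K (LamRel.idem v)

theorem e_mul_e_of_ne {v w : ZMod m} (h : v ≠ w) : e K m N v * e K m N w = 0 := by
  simpa only [e, map_mul, map_zero] using RingQuot.mkAlgHom_rel K (LamRel.orth v w h)

variable (K m N) in
/-- The arrow of `Λ_N` that leaves the vertex `v` in direction `d`. -/
def arrow : Bool → ZMod m → Lam K m N
  | true, v => a K m N v
  | false, v => ab K m N (v - 1)

theorem e_mul_arrow (d : Bool) (v : ZMod m) : e K m N v * arrow K m N d v = arrow K m N d v := by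
  cases d with
  | true => simpa only [e, a, arrow, map_mul] using RingQuot.mkAlgHom_rel K (LamRel.src_a v)
  | false =>
    have h := RingQuot.mkAlgHom_rel K (LamRel.src_ab (K := K) (N := N) (v - 1))
    rwa [sub_add_cancel, map_mul] at h

theorem arrow_mul_e (d : Bool) (v : ZMod m) :
    arrow K m N d v * e K m N (v + step d) = arrow K m N d v := by
  cases d with
  | true => simpa only [e, a, arrow, map_mul, step] using RingQuot.mkAlgHom_rel K (LamRel.tgt_a v)
  | false =>
    simpa only [e, ab, arrow, map_mul, step, ← sub_eq_add_neg] using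
      RingQuot.mkAlgHom_rel K (LamRel.tgt_ab (v - 1))

theorem arrow_mul_arrow_add_step (d : Bool) (v : ZMod m) :
    arrow K m N d v * arrow K m N d (v + step d) = 0 := by
  cases d with
  | true =>
    simpa only [a, arrow, map_mul, map_zero, step] using RingQuot.mkAlgHom_rel K (LamRel.zero_aa v)
  | false =>
    simpa only [ab, arrow, map_mul, map_zero, step, ← sub_eq_add_neg] using
      RingQuot.mkAlgHom_rel K (LamRel.zero_abab (v - 1))

theorem loop_pow_not (v : ZMod m) :
    (arrow K m N true v * arrow K m N false (v + step true)) ^ N =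
      (arrow K m N false v * arrow K m N true (v + step false)) ^ N := by
  simpa only [a, ab, arrow, map_mul, map_pow, step, add_sub_cancel_right, ← sub_eq_add_neg] using
    RingQuot.mkAlgHom_rel K (LamRel.comm v)

theorem mul_arrow_eq_zero {x : Lam K m N} {u v : ZMod m} (hx : x * e K m N u = x) (h : u ≠ v)
    (d : Bool) : x * arrow K m N d v = 0 := by
  rw [← hx, ← e_mul_arrow, mul_assoc, ← mul_assoc (e K m N u), e_mul_e_of_ne h, zero_mul, mul_zero]

theorem arrow_mul_arrow_same (d : Bool) (v w : ZMod m) :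
    arrow K m N d v * arrow K m N d w = 0 := by
  by_cases h : v + step d = w
  · rw [← h, arrow_mul_arrow_add_step]
  · exact mul_arrow_eq_zero (arrow_mul_e d v) h d

variable (K N) in
/-- The alternating path of length `n` in `Λ_N` that leaves `v` in direction `d`. -/
def path (d : Bool) (v : ZMod m) (n : ℕ) : Lam K m N := walk (e K m N) (arrow K m N) d v n

theorem path_zero (d : Bool) (v : ZMod m) : path K N d v 0 = e K m N v := rfl

theorem path_succ (d : Bool) (v : ZMod m) (n : ℕ) :
    path K N d v (n + 1) = arrow K m N d v * path K N (!d) (v + step d) n := rfl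

theorem e_mul_path (d : Bool) (v : ZMod m) (n : ℕ) :
    e K m N v * path K N d v n = path K N d v n := by
  cases n with
  | zero => exact isIdempotentElem_e v
  | succ n => rw [path_succ, ← mul_assoc, e_mul_arrow]

theorem path_mul_e_endpoint (d : Bool) (v : ZMod m) (n : ℕ) :
    path K N d v n * e K m N (endpoint d v n) = path K N d v n := by
  induction n generalizing d v with
  | zero => rw [endpoint_zero, path_zero, isIdempotentElem_e v]
  | succ n ih =>
    rw [← endpoint_not_add_step, path_succ, mul_assoc, ih]

theorem path_mul_e_of_ne {d : Bool} {v w : ZMod m} {n : ℕ} (h : endpoint d v n ≠ w) :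
    path K N d v n * e K m N w = 0 := by
  rw [← path_mul_e_endpoint, mul_assoc, e_mul_e_of_ne h, mul_zero]

theorem path_succ' (d : Bool) (v : ZMod m) (n : ℕ) :
    path K N d v (n + 1) = path K N d v n * arrow K m N (turn d n) (endpoint d v n) := by
  induction n generalizing d v with
  | zero => rw [turn_zero, endpoint_zero, path_zero, e_mul_arrow, path_succ, path_zero, arrow_mul_e]
  | succ n ih =>
    rw [path_succ, ih, ← mul_assoc, ← path_succ, endpoint_not_add_step, turn_not, ← turn_succ]

theorem path_succ_mul_arrow_turn (d : Bool) (v w : ZMod m) (n : ℕ) :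
    path K N d v (n + 1) * arrow K m N (turn d n) w = 0 := by
  rw [path_succ', mul_assoc, arrow_mul_arrow_same, mul_zero]

theorem path_two_mul_not (hN : N ≠ 0) (d : Bool) (v : ZMod m) :
    path K N d v (2 * N) = path K N (!d) v (2 * N) := by
  have true_eq_false : path K N true v (2 * N) = path K N false v (2 * N) := by
    rw [path, path, walk_two_mul_of_ne_zero arrow_mul_e true v hN,
      walk_two_mul_of_ne_zero arrow_mul_e false v hN]
    exact loop_pow_not v
  cases d
  · exact true_eq_false.symm
  · exact true_eq_false

-- At length `2 * N` the path may be rewritten with the other last arrow, which cannot be continued.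
theorem path_eq_zero (hN : N ≠ 0) (d : Bool) (v : ZMod m) {n : ℕ} (hn : 2 * N < n) :
    path K N d v n = 0 := by
  induction n, hn using Nat.le_induction with
  | base =>
    have last_turn : turn (!d) (2 * N - 1) = turn d (2 * N) := by
      rw [show 2 * N = 2 * N - 1 + 1 by omega, turn_succ, turn_not, Nat.add_sub_cancel]
    have square_zero := path_succ_mul_arrow_turn (K := K) (N := N) (!d) v
      (endpoint d v (2 * N)) (2 * N - 1)
    rwa [last_turn, show 2 * N - 1 + 1 = 2 * N by omega, ← path_two_mul_not hN,
      ← path_succ'] at square_zero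
  | succ n _ ih => rw [path_succ', ih, zero_mul]

end Paths

section Span

variable {K m N}

variable (K N) in
/-- The span of all alternating paths leaving `v`, which is the right ideal `e_v Λ_N`. -/
def pathSpan (v : ZMod m) : Submodule K (Lam K m N) :=
  Submodule.span K (Set.range fun x : Bool × ℕ => path K N x.1 v x.2)

theorem path_mem_pathSpan (d : Bool) (v : ZMod m) (n : ℕ) : path K N d v n ∈ pathSpan K N v :=
  Submodule.subset_span ⟨(d, n), rfl⟩

theorem path_mul_e_mem_pathSpan (d : Bool) (v w : ZMod m) (n : ℕ) :
    path K N d v n * e K m N w ∈ pathSpan K N v := by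
  by_cases h : endpoint d v n = w
  · rw [← h, path_mul_e_endpoint]
    exact path_mem_pathSpan d v n
  · rw [path_mul_e_of_ne h]
    exact zero_mem _

theorem path_mul_arrow_mem_pathSpan (d d' : Bool) (v w : ZMod m) (n : ℕ) :
    path K N d v n * arrow K m N d' w ∈ pathSpan K N v := by
  by_cases hw : endpoint d v n = w
  · subst hw
    by_cases hd : d' = turn d n
    · rw [hd, ← path_succ']
      exact path_mem_pathSpan d v (n + 1)
    · cases n with
      | zero =>
        have restart := path_succ' (K := K) (N := N) d' v 0
        rw [turn_zero, endpoint_zero, path_zero] at restart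
        rw [endpoint_zero, path_zero, ← restart]
        exact path_mem_pathSpan d' v 1
      | succ n =>
        have hturn : d' = turn d n := by simpa [turn_succ] using hd
        rw [hturn, path_succ_mul_arrow_turn]
        exact zero_mem _
  · rw [mul_arrow_eq_zero (path_mul_e_endpoint d v n) hw]
    exact zero_mem _

theorem path_mul_gen_mem_pathSpan (d : Bool) (v : ZMod m) (n : ℕ) (g : Gen m) :
    path K N d v n * RingQuot.mkAlgHom K (LamRel K m N) (FreeAlgebra.ι K g) ∈ pathSpan K N v := by
  cases g with
  | e w => exact path_mul_e_mem_pathSpan d v w n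
  | a w => exact path_mul_arrow_mem_pathSpan d true v w n
  | abar w =>
    have h := path_mul_arrow_mem_pathSpan (K := K) (N := N) d false v (w + 1) n
    rwa [arrow, add_sub_cancel_right] at h

theorem mul_mem_pathSpan (v : ZMod m) (y : Lam K m N) :
    ∀ x ∈ pathSpan K N v, x * y ∈ pathSpan K N v := by
  obtain ⟨y, rfl⟩ := RingQuot.mkAlgHom_surjective K (LamRel K m N) y
  induction y using FreeAlgebra.induction with
  | grade0 r =>
    intro x hx
    rw [AlgHom.commutes, ← Algebra.commutes, ← Algebra.smul_def]
    exact Submodule.smul_mem _ _ hx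
  | grade1 g =>
    intro x hx
    refine Submodule.span_induction ?_ (by simp) (fun x y _ _ hx hy => ?_) (fun r x _ hx => ?_) hx
    · rintro _ ⟨⟨d, n⟩, rfl⟩
      exact path_mul_gen_mem_pathSpan d v n g
    · rw [add_mul]
      exact add_mem hx hy
    · rw [smul_mul_assoc]
      exact Submodule.smul_mem _ r hx
  | mul y z hy hz =>
    intro x hx
    rw [map_mul, ← mul_assoc]
    exact hz _ (hy _ hx)
  | add y z hy hz =>
    intro x hx
    rw [map_add, mul_add]
    exact add_mem (hy _ hx) (hz _ hx)

variable (K N) in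
/-- The Peirce component `e_v Λ_N e_w`. -/
def corner (v w : ZMod m) : Submodule K (Lam K m N) :=
  LinearMap.range (LinearMap.mulLeftRight K (e K m N v, e K m N w))

theorem mem_corner_iff {v w : ZMod m} {x : Lam K m N} :
    x ∈ corner K N v w ↔ e K m N v * x * e K m N w = x := by
  refine ⟨?_, fun h => ⟨x, h⟩⟩
  rintro ⟨y, rfl⟩
  rw [LinearMap.mulLeftRight_apply, ← mul_assoc, ← mul_assoc, isIdempotentElem_e v, mul_assoc,
    isIdempotentElem_e w]

variable (K) in
/-- The path leaving `v` that belongs to a basis index. -/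
def basisPath (v : ZMod m) (x : Bool × Fin (2 * N)) : Lam K m N :=
  path K N (basisWalk x).1 v (basisWalk x).2

theorem path_eq_zero_or_eq_basisPath (hN : N ≠ 0) (d : Bool) (v : ZMod m) (n : ℕ) :
    path K N d v n = 0 ∨
      ∃ x : CornerIndex N v (endpoint d v n), basisPath K v x = path K N d v n := by
  rcases lt_trichotomy n (2 * N) with hn | rfl | hn
  · right
    match d, n with
    | d, 0 => exact ⟨⟨(true, ⟨0, hn⟩), by simp [basisWalk]⟩, rfl⟩
    | true, n + 1 => exact ⟨⟨(true, ⟨n + 1, hn⟩), rfl⟩, rfl⟩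
    | false, n + 1 => exact ⟨⟨(false, ⟨n, by omega⟩), rfl⟩, rfl⟩
  · right
    have last : basisWalk (false, (⟨2 * N - 1, by omega⟩ : Fin (2 * N))) = (false, 2 * N) :=
      congrArg (Prod.mk false) (Nat.sub_add_cancel (by omega))
    refine ⟨⟨(false, ⟨2 * N - 1, by omega⟩), by rw [last, endpoint_two_mul, endpoint_two_mul]⟩, ?_⟩
    rw [basisPath, last]
    cases d
    · rfl
    · exact path_two_mul_not hN false v
  · exact .inl (path_eq_zero hN d v hn)

theorem path_mul_e_mem_span_basisPath (hN : N ≠ 0) (d : Bool) (v w : ZMod m) (n : ℕ) :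
    path K N d v n * e K m N w ∈
      Submodule.span K (Set.range fun x : CornerIndex N v w => basisPath K v x.1) := by
  by_cases hw : endpoint d v n = w
  · subst hw
    rw [path_mul_e_endpoint]
    rcases path_eq_zero_or_eq_basisPath (K := K) hN d v n with h | ⟨x, hx⟩
    · rw [h]
      exact zero_mem _
    · rw [← hx]
      exact Submodule.subset_span ⟨x, rfl⟩
  · rw [path_mul_e_of_ne hw]
    exact zero_mem _

theorem corner_eq_span (hN : N ≠ 0) (v w : ZMod m) :
    corner K N v w =
      Submodule.span K (Set.range fun x : CornerIndex N v w => basisPath K v x.1) := by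
  apply le_antisymm
  · rintro _ ⟨y, rfl⟩
    have e_mul_mem : e K m N v * y ∈ pathSpan K N v :=
      mul_mem_pathSpan v y _ (path_mem_pathSpan true v 0)
    have pathSpan_le : pathSpan K N v ≤
        (Submodule.span K (Set.range fun x : CornerIndex N v w => basisPath K v x.1)).comap
          (LinearMap.mulRight K (e K m N w)) := by
      refine Submodule.span_le.mpr ?_
      rintro _ ⟨⟨d, n⟩, rfl⟩
      exact path_mul_e_mem_span_basisPath hN d v w n
    exact pathSpan_le e_mul_mem
  · rw [Submodule.span_le]
    rintro _ ⟨⟨x, rfl⟩, rfl⟩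
    refine mem_corner_iff.mpr ?_
    simp only [basisPath, e_mul_path, path_mul_e_endpoint]

end Span

section Independence

variable {K m N}

variable (K N) in
/-- The operators of the generators of `Λ_N` on functions of the alternating walks leaving `o`. -/
def genOp {q : ℕ} (o : ZMod q) : Gen q → Module.End K (Bool × ℕ → K)
  | .e v => vertexOp K o v
  | .a v => arrowOp K N o true v
  | .abar v => arrowOp K N o false (v + 1)

theorem lift_genOp_eq_of_lamRel (hN : N ≠ 0) (o : ZMod m) {x y : FreeAlgebra K (Gen m)}
    (h : LamRel K m N x y) :
    FreeAlgebra.lift K (genOp K N o) x = FreeAlgebra.lift K (genOp K N o) y := by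
  have arrowOp_false_mul_vertexOp (v : ZMod m) :
      arrowOp K N o false (v + 1) * vertexOp K o v = arrowOp K N o false (v + 1) := by
    simpa only [step, add_neg_cancel_right] using
      arrowOp_mul_vertexOp (R := K) (N := N) (o := o) false (v + 1)
  cases h <;>
    simp only [Efree, Afree, ABfree, map_mul, map_pow, map_sum, map_one, map_zero,
      FreeAlgebra.lift_ι_apply, genOp, sub_add_cancel]
  case idem v => exact vertexOp_mul_self v
  case orth v w h => exact vertexOp_mul_vertexOp_of_ne h
  case sum_e => exact sum_vertexOp
  case src_a v => exact vertexOp_mul_arrowOp true v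
  case tgt_a v => exact arrowOp_mul_vertexOp true v
  case src_ab v => exact vertexOp_mul_arrowOp false (v + 1)
  case tgt_ab v => exact arrowOp_false_mul_vertexOp v
  case zero_aa v => exact arrowOp_mul_arrowOp_same true v (v + 1)
  case zero_abab v => exact arrowOp_mul_arrowOp_same false (v + 1) v
  case comm v =>
    simpa only [step, Bool.not_true, ← sub_eq_add_neg] using loop_op_pow_not hN true v

/-- The representation of `Λ_N` on functions of the alternating walks leaving `o`. -/
noncomputable def rep (hN : N ≠ 0) (o : ZMod m) : Lam K m N →ₐ[K] Module.End K (Bool × ℕ → K) :=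
  RingQuot.liftAlgHom K ⟨FreeAlgebra.lift K (genOp K N o), fun _ _ => lift_genOp_eq_of_lamRel hN o⟩

theorem rep_e (hN : N ≠ 0) (o v : ZMod m) : rep hN o (e K m N v) = vertexOp K o v := by
  simp only [rep, e, Efree, RingQuot.liftAlgHom_mkAlgHom_apply, FreeAlgebra.lift_ι_apply, genOp]

theorem rep_arrow (hN : N ≠ 0) (o : ZMod m) (d : Bool) (v : ZMod m) :
    rep hN o (arrow K m N d v) = arrowOp K N o d v := by
  cases d <;>
    simp only [rep, arrow, a, Afree, ab, ABfree, RingQuot.liftAlgHom_mkAlgHom_apply,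
      FreeAlgebra.lift_ι_apply, genOp, sub_add_cancel]

theorem rep_path (hN : N ≠ 0) (o : ZMod m) (d : Bool) (v : ZMod m) (n : ℕ) :
    rep hN o (path K N d v n) = walk (vertexOp K o) (arrowOp K N o) d v n := by
  simp only [path, map_walk, rep_e, rep_arrow]

theorem linearIndependent_basisPath (hN : N ≠ 0) (v : ZMod m) :
    LinearIndependent K (basisPath K (N := N) v) := by
  let coordinates : Lam K m N →ₗ[K] (Bool × Fin (2 * N) → K) := LinearMap.pi fun x =>
    LinearMap.proj (true, 0) ∘ₗ LinearMap.applyₗ (Pi.single (basisWalk x) 1) ∘ₗ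
      (rep hN v).toLinearMap
  have coordinates_basisPath :
      coordinates ∘ basisPath K v = fun x => Pi.single x 1 := by
    funext x y
    change rep hN v (basisPath K v x) (Pi.single (basisWalk y) 1) (true, 0) = _
    rw [basisPath, rep_path, walk_op_basisWalk_apply]
    simp only [Pi.single_apply, basisWalk_injective.eq_iff, eq_comm]
  refine LinearIndependent.of_comp coordinates ?_
  rw [coordinates_basisPath]
  exact Pi.linearIndependent_single_one _ K

variable (K) in
/-- The basis of `e_v Λ_N e_w` formed by the alternating paths from `v` to `w`. -/
noncomputable def cornerBasis (hN : N ≠ 0) (v w : ZMod m) :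
    Module.Basis (CornerIndex N v w) K (corner K N v w) :=
  (Module.Basis.span ((linearIndependent_basisPath hN v).comp Subtype.val
    Subtype.val_injective)).map (LinearEquiv.ofEq _ _ (corner_eq_span hN v w).symm)

theorem finrank_corner (hN : N ≠ 0) (v w : ZMod m) :
    Module.finrank K (corner K N v w) =
      N * ∑ d : Bool, ((if v = w then 1 else 0) + if v + step d = w then 1 else 0) := by
  rw [Module.finrank_eq_card_basis (cornerBasis K hN v w), card_cornerIndex]

end Independence

section Hom

variable {K m N}

theorem coe_mul_e {v : ZMod m} (x : Lsub K m N v) : (x : Lam K m N) * e K m N v = x := by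
  obtain ⟨_, y, rfl⟩ := x
  simp only [LinearMap.mulRight_apply, mul_assoc, (isIdempotentElem_e v).eq]

theorem e_mul_coe {v : ZMod m} (x : Rsub K m N v) : e K m N v * (x : Lam K m N) = x := by
  obtain ⟨_, y, rfl⟩ := x
  simp only [LinearMap.mulLeft_apply, ← mul_assoc, (isIdempotentElem_e v).eq]

variable (K N) in
/-- The idempotent `e_v` as the generator of the left ideal `Λ_N e_v`. -/
def leftGen (v : ZMod m) : Lsub K m N v := ⟨e K m N v, 1, one_mul _⟩

variable (K N) in
/-- The idempotent `e_v` as the generator of the right ideal `e_v Λ_N`. -/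
def rightGen (v : ZMod m) : Rsub K m N v := ⟨e K m N v, 1, mul_one _⟩

/-- The vertex `j` of the summand `Λ_N e_i ⊗ e_j Λ_N` of `P^n` with index `σ = (i, r)`. -/
abbrev rightVertex {q : ℕ} (n : ℕ) (σ : ZMod q × Fin (n + 1)) : ZMod q :=
  σ.1 + (n : ZMod q) - 2 * ((σ.2 : ℕ) : ZMod q)

variable (K N) in
/-- The bimodule generator `e_i ⊗ e_j` of the summand `Λ_N e_i ⊗ e_j Λ_N` of `P^n`. -/
noncomputable def summandGen (n : ℕ) (σ : ZMod m × Fin (n + 1)) : Pmod K m N n :=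
  Pi.single σ (leftGen K N σ.1 ⊗ₜ[K] rightGen K N (rightVertex n σ))

theorem actP_single {n : ℕ} (σ : ZMod m × Fin (n + 1)) (x y : Lam K m N)
    (u : Lsub K m N σ.1) (v : Rsub K m N (rightVertex n σ)) :
    actP K m N n x y (Pi.single σ (u ⊗ₜ[K] v)) =
      Pi.single σ (lact K m N _ x u ⊗ₜ[K] ract K m N _ y v) := by
  funext τ
  by_cases h : τ = σ
  · subst h
    simp [actP]
  · simp [actP, h]

theorem actP_summandGen {n : ℕ} (σ : ZMod m × Fin (n + 1)) (u : Lsub K m N σ.1)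
    (v : Rsub K m N (rightVertex n σ)) :
    actP K m N n u v (summandGen K N n σ) = Pi.single σ (u ⊗ₜ[K] v) := by
  rw [summandGen, actP_single]
  congr 2
  · exact Subtype.ext (coe_mul_e u)
  · exact Subtype.ext (e_mul_coe v)

/-- The linear map `u ⊗ v ↦ u c v` on `Λ_N e_i ⊗ e_j Λ_N`. -/
noncomputable def sandwich {i j : ZMod m} (c : Lam K m N) :
    Lsub K m N i ⊗[K] Rsub K m N j →ₗ[K] Lam K m N :=
  TensorProduct.lift ((LinearMap.mul K (Lam K m N)).compl₁₂
    (LinearMap.mulRight K c ∘ₗ (Lsub K m N i).subtype) (Rsub K m N j).subtype)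

theorem sandwich_tmul {i j : ZMod m} (c : Lam K m N) (u : Lsub K m N i) (v : Rsub K m N j) :
    sandwich c (u ⊗ₜ v) = u * c * v := by
  simp [sandwich]

theorem sandwich_map_lact_ract {i j : ZMod m} (c x y : Lam K m N)
    (z : Lsub K m N i ⊗[K] Rsub K m N j) :
    sandwich c (TensorProduct.map (lact K m N i x) (ract K m N j y) z) =
      x * sandwich c z * y := by
  induction z using TensorProduct.induction_on with
  | zero => simp only [map_zero, mul_zero, zero_mul]
  | add z z' hz hz' => simp only [map_add, hz, hz', mul_add, add_mul]
  | tmul u v =>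
    rw [TensorProduct.map_tmul, sandwich_tmul, sandwich_tmul]
    change x * (u : Lam K m N) * c * (v * y) = _
    simp only [mul_assoc]

/-- The map `P^n → Λ_N` given by `u ⊗ v ↦ u c_σ v` on the summand with index `σ`. -/
noncomputable def sumSandwich {n : ℕ} (c : ZMod m × Fin (n + 1) → Lam K m N) :
    Pmod K m N n →ₗ[K] Lam K m N :=
  LinearMap.lsum K _ K fun σ => sandwich (c σ)

theorem sumSandwich_mem_homSpace {n : ℕ} (c : ZMod m × Fin (n + 1) → Lam K m N) :
    sumSandwich c ∈ HomSpace K m N n := by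
  intro x y z
  simp only [sumSandwich, LinearMap.lsum_apply, LinearMap.sum_apply, LinearMap.comp_apply,
    LinearMap.proj_apply, Finset.mul_sum, Finset.sum_mul]
  exact Finset.sum_congr rfl fun σ _ => sandwich_map_lact_ract (c σ) x y (z σ)

theorem sumSandwich_single {n : ℕ} (c : ZMod m × Fin (n + 1) → Lam K m N)
    (σ : ZMod m × Fin (n + 1)) (u : Lsub K m N σ.1) (v : Rsub K m N (rightVertex n σ)) :
    sumSandwich c (Pi.single σ (u ⊗ₜ[K] v)) = u * c σ * v := by
  rw [sumSandwich, LinearMap.lsum_piSingle, sandwich_tmul]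

theorem apply_single {n : ℕ} (f : HomSpace K m N n) (σ : ZMod m × Fin (n + 1))
    (u : Lsub K m N σ.1) (v : Rsub K m N (rightVertex n σ)) :
    f.1 (Pi.single σ (u ⊗ₜ[K] v)) = u * f.1 (summandGen K N n σ) * v := by
  rw [← actP_summandGen, f.2]

theorem apply_summandGen_mem_corner {n : ℕ} (f : HomSpace K m N n) (σ : ZMod m × Fin (n + 1)) :
    f.1 (summandGen K N n σ) ∈ corner K N σ.1 (rightVertex n σ) :=
  mem_corner_iff.mpr (apply_single f σ (leftGen K N _) (rightGen K N _)).symm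

variable (K m N) in
/-- A bimodule homomorphism `P^n → Λ_N` corresponds to the images of the generators of the
summands, where `e_i ⊗ e_j` may be sent to any element of `e_i Λ_N e_j`. -/
noncomputable def homSpaceEquiv (n : ℕ) :
    HomSpace K m N n ≃ₗ[K] ∀ σ : ZMod m × Fin (n + 1), corner K N σ.1 (rightVertex n σ) where
  toFun f σ := ⟨f.1 (summandGen K N n σ), apply_summandGen_mem_corner f σ⟩
  map_add' _ _ := rfl
  map_smul' _ _ := rfl
  invFun c := ⟨sumSandwich fun σ => c σ, sumSandwich_mem_homSpace _⟩
  left_inv f := Subtype.ext <| LinearMap.pi_ext' fun σ => TensorProduct.ext' fun u v =>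
    (sumSandwich_single _ σ u v).trans (apply_single f σ u v).symm
  right_inv c := funext fun σ => Subtype.ext <|
    (sumSandwich_single _ σ _ _).trans (mem_corner_iff.mp (c σ).2)

theorem finrank_corner_rightVertex (hN : N ≠ 0) (n : ℕ) (v : ZMod m) (r : Fin (n + 1)) :
    Module.finrank K (corner K N v (rightVertex n (v, r))) =
      N * ∑ d : Bool, ((if (n : ZMod m) - 2 * (r : ℕ) = 0 then 1 else 0) +
        if (n : ZMod m) - 2 * (r : ℕ) = step d then 1 else 0) := by
  simp only [finrank_corner hN, rightVertex, add_sub_assoc, left_eq_add, add_right_inj,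
    eq_comm (a := step _)]

theorem finrank_homSpace (hN : N ≠ 0) (n : ℕ) :
    Module.finrank K (HomSpace K m N n) = 2 * m * N * (n / m + (n + 1) / m + 1) := by
  have (v w : ZMod m) : Module.Finite K (corner K N v w) :=
    Module.Finite.of_basis (cornerBasis K hN v w)
  have (v w : ZMod m) : Module.Free K (corner K N v w) :=
    Module.Free.of_basis (cornerBasis K hN v w)
  have sum_finrank_corner (v : ZMod m) :
      ∑ r, Module.finrank K (corner K N v (rightVertex n (v, r))) =
        N * (2 * (n / m + (n + 1) / m + 1)) := by
    simp only [finrank_corner_rightVertex hN]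
    have sum_eq (d : Bool) := (Finset.sum_range _).symm.trans (sum_range_sub_two_mul_eq_step m n d)
    rw [← Finset.mul_sum, Finset.sum_comm, Finset.sum_congr rfl fun d _ => sum_eq d,
      Finset.sum_const, Finset.card_univ, Fintype.card_bool, smul_eq_mul]
  calc Module.finrank K (HomSpace K m N n)
    _ = ∑ σ : ZMod m × Fin (n + 1), Module.finrank K (corner K N σ.1 (rightVertex n σ)) := by
      rw [(homSpaceEquiv K m N n).finrank_eq, Module.finrank_pi_fintype]
    _ = ∑ _v : ZMod m, N * (2 * (n / m + (n + 1) / m + 1)) := by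
      rw [Fintype.sum_prod_type]
      exact Finset.sum_congr rfl fun v _ => sum_finrank_corner v
    _ = 2 * m * N * (n / m + (n + 1) / m + 1) := by
      rw [Finset.sum_const, Finset.card_univ, ZMod.card, smul_eq_mul]
      ring

end Hom

end Lam

theorem stmt10_general (hN : 1 ≤ N) (p t : ℕ) (ht : t < m) :
    Module.finrank K (HomSpace K m N (p * m + t)) =
      if t = m - 1 then (4 * p + 4) * m * N else (4 * p + 2) * m * N := by
  have hm : 0 < m := NeZero.pos m
  have div_eq : (p * m + t) / m = p := by
    rw [Nat.mul_comm, Nat.mul_add_div hm, Nat.div_eq_of_lt ht, add_zero]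
  rw [Lam.finrank_homSpace (Nat.one_le_iff_ne_zero.mp hN), div_eq, add_assoc (p * m)]
  split_ifs with h
  · have succ_div_eq : (p * m + (t + 1)) / m = p + 1 := by
      rw [Nat.mul_comm, Nat.mul_add_div hm, show t + 1 = m by omega, Nat.div_self hm]
    rw [succ_div_eq]
    ring
  · have succ_div_eq : (p * m + (t + 1)) / m = p := by
      rw [Nat.mul_comm, Nat.mul_add_div hm, Nat.div_eq_of_lt (by omega), add_zero]
    rw [succ_div_eq]
    ring

theorem stmt10 (hm : 3 ≤ m) (hN : 1 ≤ N) (p t : ℕ) (ht : t < m) :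
    Module.finrank K (HomSpace K m N (p * m + t)) =
      if t = m - 1 then (4 * p + 4) * m * N else (4 * p + 2) * m * N :=
  stmt10_general K m N hN p t ht
end
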